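/- (Uniform bound on the logarithmic moment.) Under the blow-up setup, there is a constant C' independent of i such that A_i := ∫_{B(0, δ_i/(2 r_i))} (1/2π) log|θ̃| · V_i(x_i + r_i θ̃) e^{v_i(θ̃)} dθ̃ ≤ C' for all i. -/

import Mathlib

open MeasureTheory Filter Metric

abbrev E2 := EuclideanSpace ℝ (Fin 2)

noncomputable def pd (j : Fin 2) (u : E2 → ℝ) (x : E2) : ℝ :=
  fderiv ℝ u x (EuclideanSpace.single j 1)

noncomputable def lapl (u : E2 → ℝ) (x : E2) : ℝ :=
  pd 0 (pd 0 u) x + pd 1 (pd 1 u) x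

open scoped Real Topology

/-!
After rescaling, `-Δw = W e^{w - w(0)}` on a large ball, `W` is nearly constant and the mass of the
measure `-Δw` does not much exceed `8π`. Testing the equation against a truncated dilation field
and symmetrising the logarithmic interaction gives a Pohozaev identity: if a ball carries mass `m`
and the surrounding annulus almost none, then `m (8π - m)` is small. By the pigeonhole principle
such an annulus exists at bounded distance from the origin, and `m` is bounded below because `w` is
Lipschitz, so a fixed ball already carries mass at least `15π/2`. The logarithmic potential of this
mass forces `w(x) - w(0) ≤ C - (13/4) log ‖x‖`, and since `13/4 > 2` the function
`log ‖x‖ e^{w - w(0)}` is integrable uniformly in `i`.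

The logarithm is replaced throughout by kernels which are smoothed at scale `η` and cut off at a
finite radius: integration by parts then has no boundary terms, and `η → 0` at the end.
-/

/-! ### Truncated logarithmic kernels -/

theorem hasDerivAt_max_zero_pow (n : ℕ) (t : ℝ) :
    HasDerivAt (fun t : ℝ => max t 0 ^ (n + 2)) ((n + 2) * max t 0 ^ (n + 1)) t := by
  rcases lt_trichotomy t 0 with ht | rfl | ht
  · have hzero : (fun t : ℝ => max t 0 ^ (n + 2)) =ᶠ[𝓝 t] fun _ => 0 := by
      filter_upwards [gt_mem_nhds ht] with x hx
      simp [max_eq_right hx.le]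
    simpa [max_eq_right ht.le] using (hasDerivAt_const t (0 : ℝ)).congr_of_eventuallyEq hzero
  · have hleft : HasDerivWithinAt (fun t : ℝ => max t 0 ^ (n + 2)) 0 (Set.Iic 0) 0 :=
      (hasDerivWithinAt_const (0 : ℝ) _ (0 : ℝ)).congr
        (fun x hx => by simp [max_eq_right (Set.mem_Iic.1 hx)]) (by simp)
    have hright : HasDerivWithinAt (fun t : ℝ => max t 0 ^ (n + 2)) 0 (Set.Ici 0) 0 := by
      have hpow := (hasDerivAt_pow (n + 2) (0 : ℝ)).hasDerivWithinAt (s := Set.Ici 0)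
      simp only [Nat.add_one_sub_one, ne_eq, Nat.add_eq_zero_iff, one_ne_zero, and_false,
        not_false_eq_true, zero_pow, mul_zero] at hpow
      exact hpow.congr (fun x hx => by simp [max_eq_left (Set.mem_Ici.1 hx)]) (by simp)
    have hunion := hleft.union hright
    rw [Set.Iic_union_Ici] at hunion
    simpa using hunion.hasDerivAt univ_mem
  · have hpow : (fun t : ℝ => max t 0 ^ (n + 2)) =ᶠ[𝓝 t] fun t => t ^ (n + 2) := by
      filter_upwards [lt_mem_nhds ht] with x hx
      rw [max_eq_left hx.le]
    simpa [max_eq_left ht.le] using (hasDerivAt_pow (n + 2) t).congr_of_eventuallyEq hpow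

section Kernels

variable {E : Type*} [NormedAddCommGroup E]

/-- The radial cutoff `(1 - ‖z‖² / ρ²)₊`, supported in the closed ball of radius `ρ`. -/
noncomputable def cutoff (ρ : ℝ) (z : E) : ℝ := max (1 - ‖z‖ ^ 2 / ρ ^ 2) 0

/-- The integrand of `logProfile`. The inner `max t 0` only makes it continuous on all of `ℝ`. -/
noncomputable def logIntegrand (ρ η t : ℝ) : ℝ :=
  1 / 2 * max (1 - t / ρ ^ 2) 0 ^ 3 / (max t 0 + η ^ 2)

/-- The truncated logarithmic kernel as a function of `s = ‖z‖²`. -/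
noncomputable def logProfile (ρ η s : ℝ) : ℝ := ∫ t in s..ρ ^ 2, logIntegrand ρ η t

/-- A version of `log (ρ / ‖z‖)` smoothed at scale `η` and cut off at radius `ρ`. -/
noncomputable def logKernel (ρ η : ℝ) (z : E) : ℝ := logProfile ρ η (‖z‖ ^ 2)

/-- The radial factor of the gradient of `logKernel`: `∇ logKernel = -gradKernel • z`. -/
noncomputable def gradKernel (ρ η : ℝ) (z : E) : ℝ := cutoff ρ z ^ 3 / (‖z‖ ^ 2 + η ^ 2)

/-- The radial factor of the gradient of `gradKernel`: `∇ gradKernel = -hessKernel • z`. -/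
noncomputable def hessKernel (ρ η : ℝ) (z : E) : ℝ :=
  6 / ρ ^ 2 * cutoff ρ z ^ 2 / (‖z‖ ^ 2 + η ^ 2) + 2 * cutoff ρ z ^ 3 / (‖z‖ ^ 2 + η ^ 2) ^ 2

/-- The part of the planar `-Δ logKernel` which concentrates at the origin as `η → 0`. -/
noncomputable def bubbleKernel (ρ η : ℝ) (z : E) : ℝ :=
  2 * cutoff ρ z ^ 3 * η ^ 2 / (‖z‖ ^ 2 + η ^ 2) ^ 2

/-- The part of the planar `Δ logKernel` caused by the cutoff; it is bounded uniformly in `η`. -/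
noncomputable def remainderKernel (ρ η : ℝ) (z : E) : ℝ :=
  6 / ρ ^ 2 * cutoff ρ z ^ 2 * (‖z‖ ^ 2 / (‖z‖ ^ 2 + η ^ 2))

theorem cutoff_nonneg (ρ : ℝ) (z : E) : 0 ≤ cutoff ρ z := le_max_right _ _

theorem cutoff_le_one (ρ : ℝ) (z : E) : cutoff ρ z ≤ 1 :=
  max_le (sub_le_self _ (by positivity)) zero_le_one

theorem cutoff_pow_nonneg (ρ : ℝ) (z : E) (n : ℕ) : 0 ≤ cutoff ρ z ^ n :=
  pow_nonneg (cutoff_nonneg ρ z) n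

theorem cutoff_pow_le_one (ρ : ℝ) (z : E) (n : ℕ) : cutoff ρ z ^ n ≤ 1 :=
  pow_le_one₀ (cutoff_nonneg ρ z) (cutoff_le_one ρ z)

theorem cutoff_eq_zero {ρ : ℝ} (hρ : 0 < ρ) {z : E} (hz : ρ ≤ ‖z‖) : cutoff ρ z = 0 := by
  refine max_eq_right ?_
  rw [sub_nonpos, one_le_div (by positivity)]
  gcongr

@[fun_prop]
theorem continuous_cutoff (ρ : ℝ) : Continuous (cutoff ρ : E → ℝ) := by
  unfold cutoff
  fun_prop

theorem norm_sq_add_sq_pos {η : ℝ} (hη : 0 < η) (z : E) : 0 < ‖z‖ ^ 2 + η ^ 2 := by positivity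

theorem continuous_logIntegrand (ρ : ℝ) {η : ℝ} (hη : 0 < η) : Continuous (logIntegrand ρ η) := by
  unfold logIntegrand
  refine Continuous.div (by fun_prop) (by fun_prop) fun t => ?_
  have : 0 ≤ max t 0 := le_max_right _ _
  positivity

theorem logIntegrand_nonneg (ρ η t : ℝ) : 0 ≤ logIntegrand ρ η t := by
  have : 0 ≤ max t 0 := le_max_right _ _
  have : 0 ≤ max (1 - t / ρ ^ 2) 0 := le_max_right _ _
  unfold logIntegrand
  positivity

theorem hasDerivAt_logProfile (ρ : ℝ) {η : ℝ} (hη : 0 < η) (s : ℝ) :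
    HasDerivAt (logProfile ρ η) (-logIntegrand ρ η s) s :=
  intervalIntegral.integral_hasDerivAt_left
    ((continuous_logIntegrand ρ hη).intervalIntegrable _ _)
    ((continuous_logIntegrand ρ hη).stronglyMeasurableAtFilter _ _)
    (continuous_logIntegrand ρ hη).continuousAt

theorem logProfile_eq_zero {ρ s : ℝ} (hρ : 0 < ρ) (η : ℝ) (hs : ρ ^ 2 ≤ s) :
    logProfile ρ η s = 0 := by
  have hzero : ∀ t ∈ Set.uIcc s (ρ ^ 2), logIntegrand ρ η t = 0 := by
    intro t ht
    rw [Set.uIcc_of_ge hs] at ht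
    have : max (1 - t / ρ ^ 2) 0 = 0 :=
      max_eq_right (sub_nonpos.2 ((one_le_div (by positivity)).2 ht.1))
    simp [logIntegrand, this]
  simp [logProfile, intervalIntegral.integral_congr hzero]

theorem logProfile_nonneg {ρ : ℝ} (hρ : 0 < ρ) (η s : ℝ) : 0 ≤ logProfile ρ η s := by
  rcases le_total (ρ ^ 2) s with hs | hs
  · rw [logProfile_eq_zero hρ η hs]
  · exact intervalIntegral.integral_nonneg hs fun t _ => logIntegrand_nonneg ρ η t

theorem logProfile_le {ρ η s : ℝ} (hη : 0 < η) (hs : 0 < s) (hsρ : s ≤ ρ ^ 2) :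
    logProfile ρ η s ≤ 1 / 2 * Real.log (ρ ^ 2 / s) := by
  rw [← integral_one_div_of_pos hs (hs.trans_le hsρ), ← intervalIntegral.integral_const_mul]
  refine intervalIntegral.integral_mono_on hsρ
    ((continuous_logIntegrand ρ hη).intervalIntegrable _ _) ?_ fun t ht => ?_
  · refine .const_mul (intervalIntegral.intervalIntegrable_one_div (fun x hx => ?_)
      continuousOn_id) _
    rw [Set.uIcc_of_le hsρ] at hx
    exact (hs.trans_le hx.1).ne'
  · have ht0 : 0 < t := hs.trans_le ht.1
    have hcut : max (1 - t / ρ ^ 2) 0 ≤ 1 := max_le (sub_le_self _ (by positivity)) zero_le_one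
    have hcut3 : max (1 - t / ρ ^ 2) 0 ^ 3 ≤ 1 := pow_le_one₀ (le_max_right _ _) hcut
    rw [logIntegrand, max_eq_left ht0.le, mul_div_assoc]
    gcongr
    exact le_add_of_nonneg_right (sq_nonneg η)

theorem logIntegrand_ge {ρ η t : ℝ} (hη : 0 < η) (ht : 0 ≤ t) (htρ : t ≤ ρ ^ 2) :
    1 / 2 * (1 / (t + η ^ 2)) - 3 / (2 * ρ ^ 2) ≤ logIntegrand ρ η t := by
  have hfrac : t / ρ ^ 2 ≤ 1 := div_le_one_of_le₀ htρ (sq_nonneg ρ)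
  have hbernoulli : 1 - 3 * (t / ρ ^ 2) ≤ (1 - t / ρ ^ 2) ^ 3 := by
    have := one_add_mul_le_pow (a := -(t / ρ ^ 2)) (by linarith) 3
    push_cast at this
    linarith
  have hratio : t / (t + η ^ 2) ≤ 1 := div_le_one_of_le₀ (by nlinarith) (by positivity)
  rw [logIntegrand, max_eq_left ht, max_eq_left (sub_nonneg.2 hfrac)]
  calc 1 / 2 * (1 / (t + η ^ 2)) - 3 / (2 * ρ ^ 2)
      ≤ 1 / 2 * (1 / (t + η ^ 2)) - 3 / (2 * ρ ^ 2) * (t / (t + η ^ 2)) := by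
        gcongr
        exact mul_le_of_le_one_right (by positivity) hratio
    _ = 1 / 2 * (1 - 3 * (t / ρ ^ 2)) / (t + η ^ 2) := by field_simp
    _ ≤ 1 / 2 * (1 - t / ρ ^ 2) ^ 3 / (t + η ^ 2) := by gcongr

theorem le_logProfile {ρ η s : ℝ} (hη : 0 < η) (hs : 0 ≤ s) (hsρ : s ≤ ρ ^ 2) :
    1 / 2 * Real.log ((ρ ^ 2 + η ^ 2) / (s + η ^ 2)) - 3 / 2 ≤ logProfile ρ η s := by
  have hint : IntervalIntegrable (fun t : ℝ => 1 / (t + η ^ 2)) volume s (ρ ^ 2) := by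
    refine ContinuousOn.intervalIntegrable
      (ContinuousOn.div (by fun_prop) (by fun_prop) fun t ht => ?_)
    rw [Set.uIcc_of_le hsρ] at ht
    have := hs.trans ht.1
    positivity
  have hlog : ∫ t in s..ρ ^ 2, 1 / (t + η ^ 2) =
      Real.log ((ρ ^ 2 + η ^ 2) / (s + η ^ 2)) := by
    rw [intervalIntegral.integral_comp_add_right (fun t => 1 / t) (η ^ 2),
      integral_one_div_of_pos (by positivity) (by positivity)]
  have hconst : (ρ ^ 2 - s) * (3 / (2 * ρ ^ 2)) ≤ 3 / 2 := by
    have h1 : ρ ^ 2 * (3 / (2 * ρ ^ 2)) ≤ 3 / 2 := by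
      rcases eq_or_ne ρ 0 with rfl | hρ
      · norm_num
      · field_simp
        exact le_rfl
    have h2 : 0 ≤ s * (3 / (2 * ρ ^ 2)) := by positivity
    linarith
  calc 1 / 2 * Real.log ((ρ ^ 2 + η ^ 2) / (s + η ^ 2)) - 3 / 2
      ≤ ∫ t in s..ρ ^ 2, (1 / 2 * (1 / (t + η ^ 2)) - 3 / (2 * ρ ^ 2)) := by
        rw [intervalIntegral.integral_sub (hint.const_mul _) (by simp),
          intervalIntegral.integral_const_mul, hlog, intervalIntegral.integral_const, smul_eq_mul]
        gcongr
    _ ≤ logProfile ρ η s := intervalIntegral.integral_mono_on hsρ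
        ((hint.const_mul _).sub (by simp))
        ((continuous_logIntegrand ρ hη).intervalIntegrable _ _)
        fun t ht => logIntegrand_ge hη (hs.trans ht.1) ht.2

theorem logKernel_eq_zero {ρ : ℝ} (hρ : 0 < ρ) (η : ℝ) {z : E} (hz : ρ ≤ ‖z‖) :
    logKernel ρ η z = 0 :=
  logProfile_eq_zero hρ η (by gcongr)

theorem logKernel_nonneg {ρ : ℝ} (hρ : 0 < ρ) (η : ℝ) (z : E) : 0 ≤ logKernel ρ η z :=
  logProfile_nonneg hρ η _

theorem logKernel_le_posLog {ρ η : ℝ} (hρ : 0 < ρ) (hη : 0 < η) {z : E} (hz : z ≠ 0) :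
    logKernel ρ η z ≤ Real.posLog (ρ / ‖z‖) := by
  have : 0 < ‖z‖ := norm_pos_iff.2 hz
  rcases le_total ρ ‖z‖ with h | h
  · rw [logKernel_eq_zero hρ η h]
    exact Real.posLog_nonneg
  · calc logKernel ρ η z ≤ 1 / 2 * Real.log (ρ ^ 2 / ‖z‖ ^ 2) :=
          logProfile_le hη (by positivity) (by gcongr)
      _ = Real.log (ρ / ‖z‖) := by rw [← div_pow, Real.log_pow]; push_cast; ring
      _ ≤ Real.posLog (ρ / ‖z‖) := le_max_right _ _

theorem posLog_le_logKernel {ρ η : ℝ} (hρ : 0 < ρ) (hη : 0 < η) (z : E) :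
    Real.posLog (ρ / (‖z‖ + η)) ≤ logKernel ρ η z + 3 / 2 := by
  have hK := logKernel_nonneg hρ η z
  refine max_le (by linarith) ?_
  rcases le_total ρ ‖z‖ with h | h
  · have : Real.log (ρ / (‖z‖ + η)) ≤ 0 :=
      Real.log_nonpos (by positivity) (div_le_one_of_le₀ (by linarith) (by positivity))
    linarith
  · have hprofile : 1 / 2 * Real.log ((ρ ^ 2 + η ^ 2) / (‖z‖ ^ 2 + η ^ 2)) - 3 / 2 ≤
        logKernel ρ η z := le_logProfile hη (by positivity) (by gcongr)
    have hlog : Real.log ((ρ / (‖z‖ + η)) ^ 2) ≤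
        Real.log ((ρ ^ 2 + η ^ 2) / (‖z‖ ^ 2 + η ^ 2)) := by
      rw [div_pow]
      gcongr
      · linarith [sq_nonneg η]
      · nlinarith [norm_nonneg z]
    rw [Real.log_pow] at hlog
    push_cast at hlog
    linarith

theorem gradKernel_nonneg (ρ η : ℝ) (z : E) : 0 ≤ gradKernel ρ η z :=
  div_nonneg (cutoff_pow_nonneg ρ z 3) (by positivity)

theorem gradKernel_eq_zero {ρ : ℝ} (hρ : 0 < ρ) (η : ℝ) {z : E} (hz : ρ ≤ ‖z‖) :
    gradKernel ρ η z = 0 := by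
  simp [gradKernel, cutoff_eq_zero hρ hz]

theorem gradKernel_mul_norm_sq_le_one (ρ η : ℝ) (z : E) : gradKernel ρ η z * ‖z‖ ^ 2 ≤ 1 := by
  rw [gradKernel, div_mul_eq_mul_div]
  refine div_le_one_of_le₀ ?_ (by positivity)
  calc cutoff ρ z ^ 3 * ‖z‖ ^ 2 ≤ 1 * ‖z‖ ^ 2 := by gcongr; exact cutoff_pow_le_one ρ z 3
    _ ≤ ‖z‖ ^ 2 + η ^ 2 := by linarith [sq_nonneg η]

theorem gradKernel_mul_norm_le (ρ η : ℝ) (z : E) : gradKernel ρ η z * ‖z‖ ≤ 1 / ‖z‖ := by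
  rcases eq_or_ne z 0 with rfl | hz
  · simp
  · rw [le_div_iff₀ (norm_pos_iff.2 hz), mul_assoc, ← sq]
    exact gradKernel_mul_norm_sq_le_one ρ η z

theorem gradKernel_mul_norm_le_of_pos (ρ : ℝ) {η : ℝ} (hη : 0 < η) (z : E) :
    gradKernel ρ η z * ‖z‖ ≤ 1 / η := by
  rw [gradKernel, div_mul_eq_mul_div, div_le_div_iff₀ (norm_sq_add_sq_pos hη z) hη]
  have hcut : cutoff ρ z ^ 3 * ‖z‖ * η ≤ 1 * ‖z‖ * η := by
    gcongr
    exact cutoff_pow_le_one ρ z 3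
  nlinarith [sq_nonneg (‖z‖ - η)]

theorem remainderKernel_nonneg (ρ η : ℝ) (z : E) : 0 ≤ remainderKernel ρ η z := by
  have := cutoff_nonneg ρ z
  unfold remainderKernel
  positivity

theorem remainderKernel_eq_zero {ρ : ℝ} (hρ : 0 < ρ) (η : ℝ) {z : E} (hz : ρ ≤ ‖z‖) :
    remainderKernel ρ η z = 0 := by
  simp [remainderKernel, cutoff_eq_zero hρ hz]

theorem remainderKernel_le (ρ η : ℝ) (z : E) : remainderKernel ρ η z ≤ 6 / ρ ^ 2 := by
  have hratio : ‖z‖ ^ 2 / (‖z‖ ^ 2 + η ^ 2) ≤ 1 :=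
    div_le_one_of_le₀ (by linarith [sq_nonneg η]) (by positivity)
  calc remainderKernel ρ η z ≤ 6 / ρ ^ 2 * 1 * 1 := by
        unfold remainderKernel
        gcongr
        exact cutoff_pow_le_one ρ z 2
    _ = 6 / ρ ^ 2 := by ring

theorem continuous_gradKernel (ρ : ℝ) {η : ℝ} (hη : 0 < η) :
    Continuous (gradKernel ρ η : E → ℝ) := by
  unfold gradKernel
  exact Continuous.div (by fun_prop) (by fun_prop) fun z => (norm_sq_add_sq_pos hη z).ne'

theorem continuous_hessKernel (ρ : ℝ) {η : ℝ} (hη : 0 < η) :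
    Continuous (hessKernel ρ η : E → ℝ) := by
  unfold hessKernel
  refine (Continuous.div (by fun_prop) (by fun_prop) fun z => ?_).add
    (Continuous.div (by fun_prop) (by fun_prop) fun z => ?_) <;> positivity

theorem continuous_bubbleKernel (ρ : ℝ) {η : ℝ} (hη : 0 < η) :
    Continuous (bubbleKernel ρ η : E → ℝ) := by
  unfold bubbleKernel
  exact Continuous.div (by fun_prop) (by fun_prop) fun z => by positivity

theorem continuous_remainderKernel (ρ : ℝ) {η : ℝ} (hη : 0 < η) :
    Continuous (remainderKernel ρ η : E → ℝ) := by
  unfold remainderKernel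
  exact Continuous.mul (by fun_prop)
    (Continuous.div (by fun_prop) (by fun_prop) fun z => (norm_sq_add_sq_pos hη z).ne')

theorem kernel_trace_eq (ρ : ℝ) {η : ℝ} (hη : 0 < η) (z : E) :
    ‖z‖ ^ 2 * hessKernel ρ η z - 2 * gradKernel ρ η z =
      remainderKernel ρ η z - bubbleKernel ρ η z := by
  have hz := (norm_sq_add_sq_pos hη z).ne'
  unfold gradKernel hessKernel remainderKernel bubbleKernel
  field_simp
  ring

end Kernels

section KernelDerivatives

variable {E : Type*} [NormedAddCommGroup E] [InnerProductSpace ℝ E]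

theorem hasFDerivAt_cutoff_pow (ρ : ℝ) (n : ℕ) (z : E) :
    HasFDerivAt (fun z : E => cutoff ρ z ^ (n + 2))
      (-(2 * (n + 2) / ρ ^ 2 * cutoff ρ z ^ (n + 1)) • innerSL ℝ z) z := by
  have hinner : HasDerivAt (fun s : ℝ => 1 - s / ρ ^ 2) (-(1 / ρ ^ 2)) (‖z‖ ^ 2) := by
    simpa using ((hasDerivAt_id (‖z‖ ^ 2)).div_const (ρ ^ 2)).const_sub 1
  have hprofile := (hasDerivAt_max_zero_pow n (1 - ‖z‖ ^ 2 / ρ ^ 2)).comp (‖z‖ ^ 2) hinner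
  refine (hprofile.comp_hasFDerivAt z (hasStrictFDerivAt_norm_sq z).hasFDerivAt).congr_fderiv ?_
  ext e
  simp only [one_div, mul_neg, neg_smul, neg_apply, smul_apply, coe_innerSL_apply, nsmul_eq_mul,
    Nat.cast_ofNat, smul_eq_mul, cutoff, neg_inj]
  ring

theorem hasFDerivAt_logKernel (ρ : ℝ) {η : ℝ} (hη : 0 < η) (z : E) :
    HasFDerivAt (logKernel ρ η) (-gradKernel ρ η z • innerSL ℝ z) z := by
  refine ((hasDerivAt_logProfile ρ hη (‖z‖ ^ 2)).comp_hasFDerivAt z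
    (hasStrictFDerivAt_norm_sq z).hasFDerivAt).congr_fderiv ?_
  ext e
  simp only [logIntegrand, one_div, norm_nonneg, pow_succ_nonneg, sup_of_le_left, neg_smul,
    neg_apply, smul_apply, coe_innerSL_apply, nsmul_eq_mul, Nat.cast_ofNat, smul_eq_mul, gradKernel,
    cutoff, neg_inj]
  ring

theorem hasFDerivAt_gradKernel (ρ : ℝ) {η : ℝ} (hη : 0 < η) (z : E) :
    HasFDerivAt (gradKernel ρ η) (-hessKernel ρ η z • innerSL ℝ z) z := by
  have hz := (norm_sq_add_sq_pos hη z).ne'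
  have hden := ((hasDerivAt_id (‖z‖ ^ 2)).add_const (η ^ 2)).inv hz |>.comp_hasFDerivAt z
    (hasStrictFDerivAt_norm_sq z).hasFDerivAt
  refine ((hasFDerivAt_cutoff_pow ρ 1 z).mul hden).congr_fderiv ?_
  ext e
  simp only [Nat.reduceAdd, id_eq, Function.comp_apply, Pi.inv_apply, Nat.cast_one, neg_smul,
    smul_neg, add_apply, smul_apply, coe_innerSL_apply, nsmul_eq_mul, Nat.cast_ofNat, smul_eq_mul,
    neg_apply, hessKernel, neg_add_rev]
  field_simp
  ring

theorem continuous_logKernel (ρ : ℝ) {η : ℝ} (hη : 0 < η) : Continuous (logKernel ρ η : E → ℝ) :=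
  continuous_iff_continuousAt.2 fun z => (hasFDerivAt_logKernel ρ hη z).continuousAt

end KernelDerivatives

/-! ### Integration by parts against radial kernels -/

theorem integrable_mul_of_hasCompactSupport_or {E : Type*} [TopologicalSpace E]
    [MeasurableSpace E] [OpensMeasurableSpace E] (μ : Measure E)
    [IsFiniteMeasureOnCompacts μ] {f g : E → ℝ} (hf : Continuous f) (hg : Continuous g)
    (hfg : HasCompactSupport f ∨ HasCompactSupport g) : Integrable (fun z => f z * g z) μ :=
  (hf.mul hg).integrable_of_hasCompactSupport (hfg.elim (·.mul_right) (·.mul_left))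

section RadialField

variable {E : Type*} [NormedAddCommGroup E] [InnerProductSpace ℝ E] {φ ψ : E → ℝ}

theorem contDiff_one_of_hasFDerivAt_radial (hφ : ∀ z, HasFDerivAt φ (-ψ z • innerSL ℝ z) z)
    (hψ : Continuous ψ) : ContDiff ℝ 1 φ :=
  contDiff_one_iff_hasFDerivAt.2 ⟨_, hψ.neg.smul (innerSL ℝ).continuous, hφ⟩

theorem contDiff_one_inner_mul_radial (hφ : ∀ z, HasFDerivAt φ (-ψ z • innerSL ℝ z) z)
    (hψ : Continuous ψ) (e : E) : ContDiff ℝ 1 fun z => inner ℝ e z * φ z :=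
  (contDiff_const.inner ℝ contDiff_id).mul (contDiff_one_of_hasFDerivAt_radial hφ hψ)

theorem fderiv_inner_mul_radial (hφ : ∀ z, HasFDerivAt φ (-ψ z • innerSL ℝ z) z) (e e' z : E) :
    fderiv ℝ (fun z => inner ℝ e z * φ z) z e' =
      inner ℝ e e' * φ z - inner ℝ e z * inner ℝ e' z * ψ z := by
  have hderiv : HasFDerivAt (fun z => inner ℝ e z * φ z)
      ((inner ℝ e z : ℝ) • (-ψ z • innerSL ℝ z) + φ z • innerSL ℝ e) z :=
    (innerSL ℝ e).hasFDerivAt.mul (hφ z)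
  rw [hderiv.fderiv]
  simp only [neg_smul, smul_neg, add_apply, neg_apply, smul_apply, innerSL_apply_apply,
    smul_eq_mul, real_inner_comm e' z]
  ring

theorem sum_inner_mul_clm_apply {ι : Type*} [Fintype ι] (b : OrthonormalBasis ι ℝ E)
    (L : E →L[ℝ] ℝ) (z : E) : ∑ i, inner ℝ (b i) z * L (b i) = L z := by
  conv_rhs => rw [← b.sum_repr' z]
  simp

variable [FiniteDimensional ℝ E] [MeasurableSpace E] [BorelSpace E] (μ : Measure E)
  [μ.IsAddHaarMeasure] {g : E → ℝ}

theorem integral_mul_fderiv_eq_neg_of_hasCompactSupport_or {f : E → ℝ} (hf : ContDiff ℝ 1 f)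
    (hg : ContDiff ℝ 1 g) (hfg : HasCompactSupport f ∨ HasCompactSupport g) (e : E) :
    ∫ z, f z * fderiv ℝ g z e ∂μ = -∫ z, fderiv ℝ f z e * g z ∂μ := by
  have hf' : Continuous fun z => fderiv ℝ f z e :=
    (hf.continuous_fderiv one_ne_zero).clm_apply continuous_const
  have hg' : Continuous fun z => fderiv ℝ g z e :=
    (hg.continuous_fderiv one_ne_zero).clm_apply continuous_const
  exact integral_mul_fderiv_eq_neg_fderiv_mul_of_integrable
    (integrable_mul_of_hasCompactSupport_or μ hf' hg.continuous
      (hfg.imp_left (·.fderiv_apply (𝕜 := ℝ) e)))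
    (integrable_mul_of_hasCompactSupport_or μ hf.continuous hg'
      (hfg.imp_right (·.fderiv_apply (𝕜 := ℝ) e)))
    (integrable_mul_of_hasCompactSupport_or μ hf.continuous hg.continuous hfg)
    (fun z _ => hf.differentiable one_ne_zero z) fun z _ => hg.differentiable one_ne_zero z

/-- A radial field is curl free. -/
theorem integral_inner_mul_radial_mul_fderiv_comm
    (hφ : ∀ z, HasFDerivAt φ (-ψ z • innerSL ℝ z) z) (hψ : Continuous ψ) (hg : ContDiff ℝ 1 g)
    (hφg : HasCompactSupport φ ∨ HasCompactSupport g) (e e' : E) :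
    ∫ z, inner ℝ e z * φ z * fderiv ℝ g z e' ∂μ =
      ∫ z, inner ℝ e' z * φ z * fderiv ℝ g z e ∂μ := by
  rw [integral_mul_fderiv_eq_neg_of_hasCompactSupport_or μ
      (contDiff_one_inner_mul_radial hφ hψ e) hg (hφg.imp_left (·.mul_left)) e',
    integral_mul_fderiv_eq_neg_of_hasCompactSupport_or μ
      (contDiff_one_inner_mul_radial hφ hψ e') hg (hφg.imp_left (·.mul_left)) e]
  simp only [fderiv_inner_mul_radial hφ, real_inner_comm e e']
  congr with z
  ring

theorem integral_radial_mul_fderiv_apply_self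
    (hφ : ∀ z, HasFDerivAt φ (-ψ z • innerSL ℝ z) z) (hψ : Continuous ψ) (hg : ContDiff ℝ 1 g)
    (hφg : HasCompactSupport φ ∨ HasCompactSupport g) :
    ∫ z, φ z * fderiv ℝ g z z ∂μ =
      -∫ z, (Module.finrank ℝ E * φ z - ‖z‖ ^ 2 * ψ z) * g z ∂μ := by
  let b := stdOrthonormalBasis ℝ E
  have hsmooth := fun i => contDiff_one_inner_mul_radial hφ hψ (b i)
  have hsupp := fun i => hφg.imp_left fun h : HasCompactSupport φ =>
    h.mul_left (f := fun z => inner ℝ (b i) z)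
  have hdiv : ∀ z, ∑ i, fderiv ℝ (fun z => inner ℝ (b i) z * φ z) z (b i) =
      Module.finrank ℝ E * φ z - ‖z‖ ^ 2 * ψ z := fun z => by
    simp only [fderiv_inner_mul_radial hφ, real_inner_self_eq_norm_sq, b.norm_eq_one,
      Finset.sum_sub_distrib, ← Finset.sum_mul]
    simp [← b.sum_sq_inner_left z, real_inner_comm z, sq]
  calc ∫ z, φ z * fderiv ℝ g z z ∂μ
      = ∫ z, ∑ i, inner ℝ (b i) z * φ z * fderiv ℝ g z (b i) ∂μ := by
        congr with z
        rw [← sum_inner_mul_clm_apply b (fderiv ℝ g z) z, Finset.mul_sum]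
        exact Finset.sum_congr rfl fun i _ => by ring
    _ = ∑ i, -∫ z, fderiv ℝ (fun z => inner ℝ (b i) z * φ z) z (b i) * g z ∂μ := by
        rw [integral_finsetSum _ fun i _ => integrable_mul_of_hasCompactSupport_or μ
          (hsmooth i).continuous ((hg.continuous_fderiv one_ne_zero).clm_apply continuous_const)
          ((hsupp i).imp_right (·.fderiv_apply (𝕜 := ℝ) (b i)))]
        exact Finset.sum_congr rfl fun i _ =>
          integral_mul_fderiv_eq_neg_of_hasCompactSupport_or μ (hsmooth i) hg (hsupp i) (b i)
    _ = -∫ z, (Module.finrank ℝ E * φ z - ‖z‖ ^ 2 * ψ z) * g z ∂μ := by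
        rw [Finset.sum_neg_distrib, ← integral_finsetSum _ fun i _ =>
          integrable_mul_of_hasCompactSupport_or μ
            (((hsmooth i).continuous_fderiv one_ne_zero).clm_apply continuous_const)
            hg.continuous ((hsupp i).imp_left (·.fderiv_apply (𝕜 := ℝ) (b i)))]
        simp only [← Finset.sum_mul, hdiv]

end RadialField

section SecondDerivatives

variable {E : Type*} [NormedAddCommGroup E] [NormedSpace ℝ E] {w : E → ℝ}

theorem contDiff_one_fderiv_apply (hw : ContDiff ℝ 2 w) (e : E) :
    ContDiff ℝ 1 fun y => fderiv ℝ w y e :=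
  (hw.fderiv_right (m := 1) (by norm_num)).clm_apply contDiff_const

theorem continuous_fderiv_fderiv_apply (hw : ContDiff ℝ 2 w) (e e' : E) :
    Continuous fun y => fderiv ℝ (fun y => fderiv ℝ w y e) y e' :=
  ((contDiff_one_fderiv_apply hw e).continuous_fderiv one_ne_zero).clm_apply continuous_const

theorem fderiv_fderiv_apply_comm (hw : ContDiff ℝ 2 w) (e e' y : E) :
    fderiv ℝ (fun y => fderiv ℝ w y e) y e' = fderiv ℝ (fun y => fderiv ℝ w y e') y e := by
  have hdiff : DifferentiableAt ℝ (fderiv ℝ w) y :=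
    (hw.fderiv_right (m := 1) (by norm_num)).differentiable one_ne_zero y
  have hflip : ∀ e, fderiv ℝ (fun y => fderiv ℝ w y e) y = (fderiv ℝ (fderiv ℝ w) y).flip e := by
    intro e
    ext v
    simp [fderiv_clm_apply hdiff]
  rw [hflip, hflip]
  exact hw.contDiffAt.isSymmSndFDerivAt (by simp) _ _

end SecondDerivatives

section Laplacian

variable {w : E2 → ℝ}

theorem pd_pd_eq (j : Fin 2) (w : E2 → ℝ) (y : E2) :
    pd j (pd j w) y = fderiv ℝ (fun y => fderiv ℝ w y (EuclideanSpace.basisFun (Fin 2) ℝ j)) y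
      (EuclideanSpace.basisFun (Fin 2) ℝ j) := by
  simp only [EuclideanSpace.basisFun_apply]
  rfl

theorem lapl_eq_sum (w : E2 → ℝ) (y : E2) : lapl w y = ∑ j, pd j (pd j w) y := by
  simp [lapl]

theorem continuous_pd_pd (hw : ContDiff ℝ 2 w) (j : Fin 2) : Continuous (pd j (pd j w)) :=
  continuous_fderiv_fderiv_apply hw _ _

theorem continuous_lapl (hw : ContDiff ℝ 2 w) : Continuous (lapl w) :=
  (continuous_pd_pd hw 0).add (continuous_pd_pd hw 1)

theorem hasCompactSupport_pd_pd (hc : HasCompactSupport w) (j : Fin 2) :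
    HasCompactSupport (pd j (pd j w)) :=
  (hc.fderiv_apply (𝕜 := ℝ) _).fderiv_apply (𝕜 := ℝ) _

theorem integral_mul_lapl_eq_sum {f : E2 → ℝ} (hf : Continuous f) (hw : ContDiff ℝ 2 w)
    (hc : HasCompactSupport w) :
    ∫ z, f z * lapl w z = ∑ j, ∫ z, f z * pd j (pd j w) z := by
  simp only [lapl_eq_sum, Finset.mul_sum]
  exact integral_finsetSum _ fun j _ => integrable_mul_of_hasCompactSupport_or _ hf
    (continuous_pd_pd hw j) (.inr (hasCompactSupport_pd_pd hc j))

theorem pd_comp_add_smul (g : E2 → ℝ) (x : E2) (r : ℝ) (j : Fin 2) :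
    pd j (fun θ => g (x + r • θ)) = fun θ => r * pd j g (x + r • θ) := by
  ext θ
  have := fderiv_comp_smul (𝕜 := ℝ) (f := fun z => g (x + z)) (x := θ) r
  simp [pd, this, fderiv_comp_add_left]

theorem lapl_comp_add_smul (w : E2 → ℝ) (x : E2) (r : ℝ) (θ : E2) :
    lapl (fun θ => w (x + r • θ)) θ = r ^ 2 * lapl w (x + r • θ) := by
  have hpd : ∀ j, pd j (pd j fun θ => w (x + r • θ)) θ = r ^ 2 * pd j (pd j w) (x + r • θ) := by
    intro j
    have hsmul : pd j (fun θ => r * pd j w (x + r • θ)) θ =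
        r * pd j (fun θ => pd j w (x + r • θ)) θ :=
      DFunLike.congr_fun (congrFun (fderiv_const_smul_field r) θ) _
    rw [pd_comp_add_smul, hsmul, pd_comp_add_smul]
    ring
  simp only [lapl, hpd]
  ring

end Laplacian

section Green

variable {w : E2 → ℝ} {η : ℝ}

theorem sum_integral_gradKernel_mul_fderiv (ρ : ℝ) (hη : 0 < η) {ι : Type*} [Fintype ι]
    (b : OrthonormalBasis ι ℝ E2) {g : E2 → ℝ} (hg : ContDiff ℝ 1 g) (hc : HasCompactSupport g) :
    ∑ i, ∫ z, gradKernel ρ η z * (inner ℝ (b i) z * fderiv ℝ g z (b i)) =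
      (∫ z, remainderKernel ρ η z * g z) - ∫ z, bubbleKernel ρ η z * g z := by
  have hint : ∀ i, Integrable fun z =>
      gradKernel ρ η z * (inner ℝ (b i) z * fderiv ℝ g z (b i)) := fun i =>
    integrable_mul_of_hasCompactSupport_or _ (continuous_gradKernel ρ hη)
      (Continuous.mul (by fun_prop)
        ((hg.continuous_fderiv one_ne_zero).clm_apply continuous_const))
      (.inr (hc.fderiv_apply (𝕜 := ℝ) (b i)).mul_left)
  rw [← integral_finsetSum _ fun i _ => hint i]
  simp only [← Finset.mul_sum, sum_inner_mul_clm_apply]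
  rw [integral_radial_mul_fderiv_apply_self volume (hasFDerivAt_gradKernel ρ hη)
      (continuous_hessKernel ρ hη) hg (.inr hc), ← integral_neg,
    ← integral_sub (integrable_mul_of_hasCompactSupport_or _ (continuous_remainderKernel ρ hη)
      hg.continuous (.inr hc)) (integrable_mul_of_hasCompactSupport_or _
      (continuous_bubbleKernel ρ hη) hg.continuous (.inr hc))]
  congr with z
  rw [← sub_mul, ← kernel_trace_eq ρ hη z, finrank_euclideanSpace_fin]
  push_cast
  ring

theorem integral_logKernel_mul_lapl (ρ : ℝ) (hη : 0 < η) (hw : ContDiff ℝ 2 w)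
    (hc : HasCompactSupport w) :
    ∫ z, logKernel ρ η z * lapl w z =
      (∫ z, remainderKernel ρ η z * w z) - ∫ z, bubbleKernel ρ η z * w z := by
  rw [integral_mul_lapl_eq_sum (continuous_logKernel ρ hη) hw hc,
    ← sum_integral_gradKernel_mul_fderiv ρ hη (EuclideanSpace.basisFun (Fin 2) ℝ)
      (hw.of_le (by norm_num)) hc]
  refine Finset.sum_congr rfl fun j _ => ?_
  simp only [pd_pd_eq]
  rw [integral_mul_fderiv_eq_neg_of_hasCompactSupport_or volume
    (contDiff_one_of_hasFDerivAt_radial (hasFDerivAt_logKernel ρ hη)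
      (continuous_gradKernel ρ hη)) (contDiff_one_fderiv_apply hw _)
    (.inr (hc.fderiv_apply (𝕜 := ℝ) _)), ← integral_neg]
  congr with z
  simp only [(hasFDerivAt_logKernel ρ hη z).fderiv, smul_apply, innerSL_apply_apply,
    smul_eq_mul, real_inner_comm z]
  ring

theorem integral_inner_mul_gradKernel_mul_lapl (ρ : ℝ) (hη : 0 < η) (hw : ContDiff ℝ 2 w)
    (hc : HasCompactSupport w) (e : E2) :
    ∫ z, inner ℝ e z * gradKernel ρ η z * lapl w z =
      (∫ z, remainderKernel ρ η z * fderiv ℝ w z e) -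
        ∫ z, bubbleKernel ρ η z * fderiv ℝ w z e := by
  rw [integral_mul_lapl_eq_sum (f := fun z => inner ℝ e z * gradKernel ρ η z)
      (Continuous.mul (by fun_prop) (continuous_gradKernel ρ hη)) hw hc,
    ← sum_integral_gradKernel_mul_fderiv ρ hη (EuclideanSpace.basisFun (Fin 2) ℝ)
      (contDiff_one_fderiv_apply hw e) (hc.fderiv_apply (𝕜 := ℝ) e)]
  refine Finset.sum_congr rfl fun j _ => ?_
  simp only [pd_pd_eq]
  rw [integral_inner_mul_radial_mul_fderiv_comm volume (hasFDerivAt_gradKernel ρ hη)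
    (continuous_hessKernel ρ hη) (contDiff_one_fderiv_apply hw _)
    (.inr (hc.fderiv_apply (𝕜 := ℝ) _))]
  simp only [fderiv_fderiv_apply_comm hw (EuclideanSpace.basisFun (Fin 2) ℝ j) e]
  congr with z
  ring

theorem integral_comp_sub_mul_eq (F g : E2 → ℝ) (x : E2) :
    ∫ y, F (y - x) * g y = ∫ z, F z * g (x + z) := by
  rw [← integral_add_right_eq_self _ x]
  simp only [add_sub_cancel_right, add_comm x]

theorem lapl_comp_add (w : E2 → ℝ) (x z : E2) : lapl (fun z => w (x + z)) z = lapl w (x + z) := by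
  simpa using lapl_comp_add_smul w x 1 z

theorem green_representation (ρ : ℝ) (hη : 0 < η) (hw : ContDiff ℝ 2 w)
    (hc : HasCompactSupport w) (x : E2) :
    ∫ y, bubbleKernel ρ η (y - x) * w y = (∫ y, remainderKernel ρ η (y - x) * w y) +
      ∫ y, logKernel ρ η (y - x) * -lapl w y := by
  have hgreen := integral_logKernel_mul_lapl ρ hη (w := fun z => w (x + z))
    (hw.comp (contDiff_const.add contDiff_id)) (hc.comp_homeomorph (Homeomorph.addLeft x))
  simp only [lapl_comp_add, integral_comp_sub_mul_eq, mul_neg, integral_neg] at hgreen ⊢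
  linarith

theorem green_representation_fderiv (ρ : ℝ) (hη : 0 < η) (hw : ContDiff ℝ 2 w)
    (hc : HasCompactSupport w) (x e : E2) :
    ∫ y, bubbleKernel ρ η (y - x) * fderiv ℝ w y e =
      (∫ y, remainderKernel ρ η (y - x) * fderiv ℝ w y e) +
      ∫ y, inner ℝ e (y - x) * gradKernel ρ η (y - x) * -lapl w y := by
  have hgreen := integral_inner_mul_gradKernel_mul_lapl ρ hη (w := fun z => w (x + z))
    (hw.comp (contDiff_const.add contDiff_id)) (hc.comp_homeomorph (Homeomorph.addLeft x)) e
  have hshift := integral_comp_sub_mul_eq (fun z => inner ℝ e z * gradKernel ρ η z)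
    (fun y => -lapl w y) x
  simp only [lapl_comp_add, fderiv_comp_add_left] at hgreen
  simp only [integral_comp_sub_mul_eq, mul_neg, integral_neg] at hshift ⊢
  rw [hshift]
  linarith

end Green

/-! ### The limit `η → 0` -/

section TruncInv

variable {E : Type*} [NormedAddCommGroup E]

/-- The inverse norm restricted to the unit ball: an integrable upper bound for the logarithmic
singularity in dimension at least two. -/
noncomputable def truncInv (z : E) : ℝ := (ball (0 : E) 1).indicator (fun z => 1 / ‖z‖) z

theorem truncInv_of_lt {z : E} (hz : ‖z‖ < 1) : truncInv z = 1 / ‖z‖ :=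
  Set.indicator_of_mem (mem_ball_zero_iff.2 hz) _

theorem truncInv_nonneg (z : E) : 0 ≤ truncInv z :=
  Set.indicator_apply_nonneg fun _ => by positivity

theorem one_div_norm_le_one_add_truncInv (z : E) : 1 / ‖z‖ ≤ 1 + truncInv z := by
  rcases lt_or_ge ‖z‖ 1 with hz | hz
  · rw [truncInv_of_lt hz]
    linarith
  · linarith [div_le_one_of_le₀ hz (norm_nonneg z), truncInv_nonneg z]

theorem posLog_one_div_norm_le_truncInv (z : E) : Real.posLog (1 / ‖z‖) ≤ truncInv z := by
  refine max_le (truncInv_nonneg z) ?_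
  rcases lt_or_ge ‖z‖ 1 with hz | hz
  · rw [truncInv_of_lt hz]
    exact Real.log_le_self (by positivity)
  · exact (Real.log_nonpos (by positivity) (div_le_one_of_le₀ hz (norm_nonneg z))).trans
      (truncInv_nonneg z)

theorem integrable_truncInv [NormedSpace ℝ E] [FiniteDimensional ℝ E] [MeasurableSpace E]
    [BorelSpace E] (hE : 2 ≤ Module.finrank ℝ E) (μ : Measure E) [μ.IsAddHaarMeasure] :
    Integrable (truncInv : E → ℝ) μ := by
  refine (integrable_indicator_iff measurableSet_ball).2 ?_
  refine integrableOn_ball_of_norm_le_rpow (C := 1) (α := 1) (by lia) ?_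
    (.of_forall fun z => ?_) (Measurable.aestronglyMeasurable (by fun_prop))
  · exact_mod_cast hE
  · simp [Real.rpow_neg_one]

end TruncInv

/-- The rotationally symmetric density of mass `2π` obtained by rescaling `bubbleKernel`. -/
noncomputable def bubble (z : E2) : ℝ := 2 / (‖z‖ ^ 2 + 1) ^ 2

theorem continuous_bubble : Continuous bubble := by
  unfold bubble
  exact Continuous.div (by fun_prop) (by fun_prop) fun z => by positivity

theorem bubble_nonneg (z : E2) : 0 ≤ bubble z := by
  unfold bubble
  positivity

theorem integrableOn_and_integral_mul_two_div_sq_add_one_sq :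
    IntegrableOn (fun y : ℝ => y * (2 / (y ^ 2 + 1) ^ 2)) (Set.Ioi 0) ∧
      ∫ y in Set.Ioi (0 : ℝ), y * (2 / (y ^ 2 + 1) ^ 2) = 1 := by
  have hderiv : ∀ y ∈ Set.Ioi (0 : ℝ),
      HasDerivAt (fun y : ℝ => -(y ^ 2 + 1)⁻¹) (y * (2 / (y ^ 2 + 1) ^ 2)) y := fun y _ => by
    have hden : HasDerivAt (fun y : ℝ => y ^ 2 + 1) (2 * y) y := by
      simpa using (hasDerivAt_pow 2 y).add_const (1 : ℝ)
    exact (hden.inv (by positivity)).neg.congr_deriv (by field_simp)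
  have hcont : ContinuousWithinAt (fun y : ℝ => -(y ^ 2 + 1)⁻¹) (Set.Ici 0) 0 :=
    (Continuous.inv₀ (by fun_prop) fun y => by positivity).neg.continuousWithinAt
  have hlim : Tendsto (fun y : ℝ => -(y ^ 2 + 1)⁻¹) atTop (𝓝 0) := by
    simpa using (tendsto_atTop_add_const_right _ (1 : ℝ)
      (tendsto_pow_atTop two_ne_zero)).inv_tendsto_atTop.neg
  have hnonneg : ∀ y ∈ Set.Ioi (0 : ℝ), 0 ≤ y * (2 / (y ^ 2 + 1) ^ 2) := fun y hy => by
    have := Set.mem_Ioi.1 hy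
    positivity
  exact ⟨integrableOn_Ioi_deriv_of_nonneg hcont hderiv hnonneg hlim, by
    simp [integral_Ioi_of_hasDerivAt_of_nonneg hcont hderiv hnonneg hlim]⟩

theorem integrable_bubble : Integrable bubble :=
  (integrable_fun_norm_addHaar volume (f := fun y : ℝ => 2 / (y ^ 2 + 1) ^ 2)).2 <| by
    simpa using integrableOn_and_integral_mul_two_div_sq_add_one_sq.1

theorem integral_bubble : ∫ z, bubble z = 2 * π := by
  have hpolar := integral_fun_norm_addHaar (volume : Measure E2)
    fun y : ℝ => 2 / (y ^ 2 + 1) ^ 2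
  simpa [integrableOn_and_integral_mul_two_div_sq_add_one_sq.2, Measure.real,
    EuclideanSpace.volume_ball_fin_two, bubble, Real.pi_nonneg] using hpolar

theorem bubbleKernel_smul (ρ : ℝ) {η : ℝ} (hη : 0 < η) (z : E2) :
    η ^ 2 * bubbleKernel ρ η (η • z) = cutoff ρ (η • z) ^ 3 * bubble z := by
  rw [bubbleKernel, bubble, norm_smul, Real.norm_of_nonneg hη.le]
  field_simp

theorem integral_bubbleKernel_sub_mul (ρ : ℝ) {η : ℝ} (hη : 0 < η) (x : E2) (g : E2 → ℝ) :
    ∫ y, bubbleKernel ρ η (y - x) * g y =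
      ∫ z, cutoff ρ (η • z) ^ 3 * bubble z * g (x + η • z) := by
  have hscale := Measure.integral_comp_smul (volume : Measure E2)
    (fun z => bubbleKernel ρ η z * g (x + z)) η
  rw [finrank_euclideanSpace_fin, abs_of_pos (by positivity), smul_eq_mul] at hscale
  rw [integral_comp_sub_mul_eq, ← mul_inv_cancel_left₀ (b := ∫ z, _) (pow_ne_zero 2 hη.ne'),
    ← hscale, ← integral_const_mul]
  simp only [← mul_assoc, bubbleKernel_smul ρ hη]

theorem norm_cutoff_mul_bubble_mul_le {B : ℝ} {g : E2 → ℝ} (hB : ∀ y, ‖g y‖ ≤ B) (ρ η : ℝ)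
    (x z : E2) : ‖cutoff ρ (η • z) ^ 3 * bubble z * g (x + η • z)‖ ≤ bubble z * B := by
  have hb := bubble_nonneg z
  rw [norm_mul, norm_mul, Real.norm_of_nonneg (cutoff_pow_nonneg _ _ _), Real.norm_of_nonneg hb]
  gcongr
  · exact mul_le_of_le_one_left hb (cutoff_pow_le_one _ _ _)
  · exact hB _

theorem norm_integral_bubbleKernel_sub_mul_le (ρ : ℝ) {η B : ℝ} (hη : 0 < η) (x : E2)
    {g : E2 → ℝ} (hB : ∀ y, ‖g y‖ ≤ B) :
    ‖∫ y, bubbleKernel ρ η (y - x) * g y‖ ≤ 2 * π * B := by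
  rw [integral_bubbleKernel_sub_mul ρ hη, ← integral_bubble, ← integral_mul_const]
  exact norm_integral_le_of_norm_le (integrable_bubble.mul_const _)
    (.of_forall fun z => norm_cutoff_mul_bubble_mul_le hB ρ η x z)

theorem tendsto_integral_bubbleKernel_sub_mul (ρ : ℝ) (x : E2) {g : E2 → ℝ} (hg : Continuous g)
    (hc : HasCompactSupport g) :
    Tendsto (fun η => ∫ y, bubbleKernel ρ η (y - x) * g y) (𝓝[>] 0) (𝓝 (2 * π * g x)) := by
  obtain ⟨B, hB⟩ := hg.bounded_above_of_compact_support hc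
  have hcont : ∀ z, Continuous fun η : ℝ => cutoff ρ (η • z) ^ 3 * bubble z * g (x + η • z) :=
    fun z => by fun_prop
  rw [← integral_bubble, ← integral_mul_const]
  refine Tendsto.congr' (eventually_mem_nhdsWithin.mono fun η hη =>
    (integral_bubbleKernel_sub_mul ρ hη x g).symm) ?_
  refine tendsto_integral_filter_of_dominated_convergence (fun z => bubble z * B)
    (.of_forall fun η => ?_)
    (.of_forall fun η => .of_forall fun z => norm_cutoff_mul_bubble_mul_le hB ρ η x z)
    (integrable_bubble.mul_const _)
    (.of_forall fun z => ?_)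
  · have := continuous_bubble
    exact Continuous.aestronglyMeasurable (by fun_prop)
  · have hlim := ((hcont z).tendsto 0).mono_left (nhdsWithin_le_nhds (s := Set.Ioi 0))
    simpa [cutoff] using hlim

theorem tendsto_remainderKernel (ρ : ℝ) {E : Type*} [NormedAddCommGroup E] {z : E} (hz : z ≠ 0) :
    Tendsto (fun η => remainderKernel ρ η z) (𝓝[>] 0) (𝓝 (6 / ρ ^ 2 * cutoff ρ z ^ 2)) := by
  have hz' : ‖z‖ ^ 2 ≠ 0 := pow_ne_zero 2 (norm_ne_zero_iff.2 hz)
  have hlim : Tendsto (fun η : ℝ => ‖z‖ ^ 2 / (‖z‖ ^ 2 + η ^ 2)) (𝓝[>] 0) (𝓝 1) := by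
    have hcont : ContinuousAt (fun η : ℝ => ‖z‖ ^ 2 / (‖z‖ ^ 2 + η ^ 2)) 0 :=
      ContinuousAt.div (by fun_prop) (by fun_prop) (by simpa using hz')
    simpa [hz'] using hcont.tendsto.mono_left nhdsWithin_le_nhds
  simpa [remainderKernel] using hlim.const_mul (6 / ρ ^ 2 * cutoff ρ z ^ 2)

theorem tendsto_integral_remainderKernel_sub_mul (ρ : ℝ) (x : E2) {g : E2 → ℝ}
    (hg : Continuous g) (hc : HasCompactSupport g) :
    Tendsto (fun η => ∫ y, remainderKernel ρ η (y - x) * g y) (𝓝[>] 0)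
      (𝓝 (∫ y, 6 / ρ ^ 2 * cutoff ρ (y - x) ^ 2 * g y)) := by
  refine tendsto_integral_filter_of_dominated_convergence (fun y => 6 / ρ ^ 2 * ‖g y‖)
    (eventually_mem_nhdsWithin.mono fun η hη => ?_) (.of_forall fun η => .of_forall fun y => ?_)
    ((hg.integrable_of_hasCompactSupport hc).norm.const_mul _) ?_
  · exact (((continuous_remainderKernel ρ hη).comp (by fun_prop)).mul hg).aestronglyMeasurable
  · rw [norm_mul, Real.norm_of_nonneg (remainderKernel_nonneg ρ η _)]
    gcongr
    exact remainderKernel_le ρ η _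
  · filter_upwards [compl_mem_ae_iff.2 (measure_singleton x)] with y hy
    exact (tendsto_remainderKernel ρ (sub_ne_zero.2 hy)).mul_const (g y)

/-! ### The truncated dilation field -/

theorem hasCompactSupport_of_eq_zero_of_le_norm {E F : Type*} [NormedAddCommGroup E]
    [ProperSpace E] [Zero F] {P : ℝ} {f : E → F} (hf : ∀ y, P ≤ ‖y‖ → f y = 0) :
    HasCompactSupport f :=
  HasCompactSupport.intro (isCompact_closedBall 0 P) fun y hy => hf y <| by
    simpa using (not_le.1 (mt mem_closedBall_zero_iff.2 hy)).le

section Cutoff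

variable {E : Type*} [NormedAddCommGroup E]

theorem cutoff_le_cutoff (P : ℝ) {x y : E} (hxy : ‖x‖ ≤ ‖y‖) : cutoff P y ≤ cutoff P x := by
  unfold cutoff
  gcongr

theorem cutoff_mul_norm_sq_div (P : ℝ) (y : E) :
    cutoff P y * (‖y‖ ^ 2 / P ^ 2) = cutoff P y * (1 - cutoff P y) := by
  unfold cutoff
  rcases max_choice (1 - ‖y‖ ^ 2 / P ^ 2) 0 with h | h <;> rw [h] <;> ring

variable [NormedSpace ℝ E]

/-- The field `y ↦ cutoff P y ^ 2 • y`: the generator of dilations, truncated at radius `P`. -/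
noncomputable def cutoffField (P : ℝ) (y : E) : E := cutoff P y ^ 2 • y

theorem continuous_cutoffField (P : ℝ) : Continuous (cutoffField P : E → E) :=
  ((continuous_cutoff P).pow 2).smul continuous_id

theorem cutoffField_eq_zero {P : ℝ} (hP : 0 < P) {y : E} (hy : P ≤ ‖y‖) :
    cutoffField P y = 0 := by
  rw [cutoffField, cutoff_eq_zero hP hy, zero_pow two_ne_zero, zero_smul]

theorem norm_cutoffField_le_norm (P : ℝ) (y : E) : ‖cutoffField P y‖ ≤ ‖y‖ := by
  rw [cutoffField, norm_smul, Real.norm_of_nonneg (cutoff_pow_nonneg P y 2)]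
  exact mul_le_of_le_one_left (norm_nonneg y) (cutoff_pow_le_one P y 2)

theorem norm_cutoffField_le {P : ℝ} (hP : 0 < P) (y : E) : ‖cutoffField P y‖ ≤ P := by
  rcases le_or_gt P ‖y‖ with hy | hy
  · rw [cutoffField_eq_zero hP hy, norm_zero]
    exact hP.le
  · exact (norm_cutoffField_le_norm P y).trans hy.le

end Cutoff

/-- The divergence of `cutoffField P` in the plane. -/
noncomputable def cutoffFieldDiv (P : ℝ) (y : E2) : ℝ := 2 * cutoff P y * (3 * cutoff P y - 2)

theorem continuous_cutoffFieldDiv (P : ℝ) : Continuous (cutoffFieldDiv P) := by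
  unfold cutoffFieldDiv
  fun_prop

theorem cutoffFieldDiv_eq_zero {P : ℝ} (hP : 0 < P) {y : E2} (hy : P ≤ ‖y‖) :
    cutoffFieldDiv P y = 0 := by
  rw [cutoffFieldDiv, cutoff_eq_zero hP hy, mul_zero, zero_mul]

theorem neg_one_le_cutoffFieldDiv (P : ℝ) (y : E2) : -1 ≤ cutoffFieldDiv P y := by
  unfold cutoffFieldDiv
  nlinarith [sq_nonneg (cutoff P y - 1 / 3)]

theorem abs_cutoffFieldDiv_le (P : ℝ) (y : E2) : |cutoffFieldDiv P y| ≤ 2 := by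
  refine abs_le.2 ⟨by linarith [neg_one_le_cutoffFieldDiv P y], ?_⟩
  unfold cutoffFieldDiv
  nlinarith [cutoff_nonneg P y, cutoff_le_one P y]

theorem le_cutoffFieldDiv {R l : ℝ} (hR : 0 < R) (hl : 0 < l) {y : E2} (hy : ‖y‖ ≤ R) :
    2 - 8 / l ^ 2 ≤ cutoffFieldDiv (l * R) y := by
  have hcut : 1 - 1 / l ^ 2 ≤ cutoff (l * R) y := by
    refine le_max_of_le_left (sub_le_sub_left ?_ 1)
    calc ‖y‖ ^ 2 / (l * R) ^ 2 ≤ R ^ 2 / (l * R) ^ 2 := by gcongr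
      _ = 1 / l ^ 2 := by field_simp
  rw [cutoffFieldDiv, show 8 / l ^ 2 = 8 * (1 / l ^ 2) by ring]
  nlinarith [sq_nonneg (1 - cutoff (l * R) y)]

theorem integral_fderiv_apply_cutoffField {P : ℝ} (hP : 0 < P) {g : E2 → ℝ}
    (hg : ContDiff ℝ 1 g) :
    ∫ y, fderiv ℝ g y (cutoffField P y) = -∫ y, cutoffFieldDiv P y * g y := by
  have hcut : ∀ y : E2, HasFDerivAt (fun z => cutoff P z ^ 2)
      (-(4 / P ^ 2 * cutoff P y) • innerSL ℝ y) y := fun y =>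
    (hasFDerivAt_cutoff_pow P 0 y).congr_fderiv (by norm_num)
  have hdiv := integral_radial_mul_fderiv_apply_self volume hcut
    (continuous_const.mul (continuous_cutoff P)) hg
    (.inl <| hasCompactSupport_of_eq_zero_of_le_norm fun y hy => by
      rw [cutoff_eq_zero hP hy, zero_pow two_ne_zero])
  simp only [cutoffField, map_smul, smul_eq_mul]
  rw [hdiv, finrank_euclideanSpace_fin]
  congr 2 with y
  have hrel := cutoff_mul_norm_sq_div P y
  rw [cutoffFieldDiv, Nat.cast_ofNat]
  linear_combination -4 * g y * hrel

theorem le_integral_cutoffFieldDiv (μ : Measure E2) [IsFiniteMeasure μ] {R l : ℝ} (hR : 0 < R)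
    (hl : 1 ≤ l) :
    (2 - 8 / l ^ 2) * μ.real (ball 0 R) - (μ.real (ball 0 (l ^ 2 * R)) - μ.real (ball 0 R)) ≤
      ∫ y, cutoffFieldDiv (l * R) y ∂μ := by
  have hl' : 0 < l := one_pos.trans_le hl
  have hsub : ball (0 : E2) R ⊆ ball 0 (l ^ 2 * R) :=
    ball_subset_ball (le_mul_of_one_le_left hR.le (one_le_pow₀ hl))
  have hind : ∀ {S : Set E2}, MeasurableSet S → Integrable (S.indicator (1 : E2 → ℝ)) μ :=
    fun hS => (integrable_const (1 : ℝ)).indicator hS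
  have hdiff : MeasurableSet (ball (0 : E2) (l ^ 2 * R) \ ball 0 R) :=
    measurableSet_ball.diff measurableSet_ball
  have hintdiv : Integrable (cutoffFieldDiv (l * R)) μ :=
    .of_bound (continuous_cutoffFieldDiv _).aestronglyMeasurable 2
      (.of_forall (abs_cutoffFieldDiv_le _))
  rw [← measureReal_sdiff hsub measurableSet_ball, ← integral_indicator_one measurableSet_ball,
    ← integral_indicator_one hdiff, ← integral_const_mul,
    ← integral_sub ((hind measurableSet_ball).const_mul _) (hind hdiff)]
  refine integral_mono (((hind measurableSet_ball).const_mul _).sub (hind hdiff)) hintdiv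
    fun y => ?_
  by_cases hy : y ∈ ball 0 R
  · have hdiv := le_cutoffFieldDiv hR hl' (mem_ball_zero_iff.1 hy).le
    simpa [Set.indicator_of_mem hy, hy] using hdiv
  by_cases hy' : y ∈ ball 0 (l ^ 2 * R)
  · have hdiv := neg_one_le_cutoffFieldDiv (l * R) y
    simpa [Set.indicator, hy, hy'] using hdiv
  · have hzero : cutoffFieldDiv (l * R) y = 0 := by
      refine cutoffFieldDiv_eq_zero (by positivity) (le_trans ?_ (by simpa using hy'))
      rw [sq, mul_assoc]
      exact le_mul_of_one_le_left (by positivity) hl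
    simp [Set.indicator, hy, hy', hzero]

/-! ### Symmetrisation -/

section Symmetrization

variable {E : Type*} [NormedAddCommGroup E] [InnerProductSpace ℝ E]

theorem inner_sub_cutoffField_sub_le (P : ℝ) (x y : E) :
    inner ℝ (y - x) (cutoffField P y - cutoffField P x) ≤ ‖y - x‖ ^ 2 := by
  have hexpand : ‖y - x‖ ^ 2 - inner ℝ (y - x) (cutoffField P y - cutoffField P x) =
      (‖y‖ - ‖x‖) * ((1 - cutoff P y ^ 2) * ‖y‖ - (1 - cutoff P x ^ 2) * ‖x‖) +
        ((1 - cutoff P x ^ 2) + (1 - cutoff P y ^ 2)) * (‖x‖ * ‖y‖ - inner ℝ x y) := by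
    rw [norm_sub_sq_real]
    simp only [cutoffField, inner_sub_left, inner_sub_right, inner_smul_right,
      real_inner_self_eq_norm_sq, real_inner_comm x y]
    ring
  have hmono : ∀ {a b : E}, ‖a‖ ≤ ‖b‖ →
      (1 - cutoff P a ^ 2) * ‖a‖ ≤ (1 - cutoff P b ^ 2) * ‖b‖ := fun {a b} hab => by
    gcongr
    · linarith [cutoff_pow_le_one P b 2]
    · exact cutoff_nonneg P b
    · exact cutoff_le_cutoff P hab
  have hradial :
      0 ≤ (‖y‖ - ‖x‖) * ((1 - cutoff P y ^ 2) * ‖y‖ - (1 - cutoff P x ^ 2) * ‖x‖) := by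
    rcases le_total ‖x‖ ‖y‖ with hxy | hxy
    · exact mul_nonneg (by linarith) (by linarith [hmono hxy])
    · exact mul_nonneg_of_nonpos_of_nonpos (by linarith) (by linarith [hmono hxy])
  have hangular :
      0 ≤ ((1 - cutoff P x ^ 2) + (1 - cutoff P y ^ 2)) * (‖x‖ * ‖y‖ - inner ℝ x y) :=
    mul_nonneg (by linarith [cutoff_pow_le_one P x 2, cutoff_pow_le_one P y 2])
      (sub_nonneg.2 (real_inner_le_norm x y))
  linarith

theorem inner_sub_cutoffField_sub_mul_gradKernel_le_one (P ρ η : ℝ) (x y : E) :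
    inner ℝ (y - x) (cutoffField P y - cutoffField P x) * gradKernel ρ η (y - x) ≤ 1 :=
  calc inner ℝ (y - x) (cutoffField P y - cutoffField P x) * gradKernel ρ η (y - x)
      ≤ ‖y - x‖ ^ 2 * gradKernel ρ η (y - x) :=
        mul_le_mul_of_nonneg_right (inner_sub_cutoffField_sub_le P x y) (gradKernel_nonneg ρ η _)
    _ ≤ 1 := by rw [mul_comm]; exact gradKernel_mul_norm_sq_le_one ρ η _

theorem norm_inner_mul_gradKernel_le (ρ η : ℝ) (e z : E) :
    ‖inner ℝ e z * gradKernel ρ η z‖ ≤ ‖e‖ * (gradKernel ρ η z * ‖z‖) := by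
  rw [norm_mul, Real.norm_of_nonneg (gradKernel_nonneg ρ η z)]
  calc ‖inner ℝ e z‖ * gradKernel ρ η z ≤ ‖e‖ * ‖z‖ * gradKernel ρ η z :=
        mul_le_mul_of_nonneg_right (norm_inner_le_norm e z) (gradKernel_nonneg ρ η z)
    _ = ‖e‖ * (gradKernel ρ η z * ‖z‖) := by ring

theorem norm_inner_cutoffField_mul_gradKernel_le {P l : ℝ} (hP : 0 < P) (hl : 2 ≤ l) (ρ η : ℝ)
    {x y : E} (hy : l * P ≤ ‖y‖) :
    ‖inner ℝ (cutoffField P x) (y - x) * gradKernel ρ η (y - x)‖ ≤ 2 / l := by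
  rcases le_or_gt P ‖x‖ with hx | hx
  · rw [cutoffField_eq_zero hP hx, inner_zero_left, zero_mul, norm_zero]
    positivity
  have hdist : l * P / 2 ≤ ‖y - x‖ := by nlinarith [norm_sub_norm_le y x]
  calc ‖inner ℝ (cutoffField P x) (y - x) * gradKernel ρ η (y - x)‖
      ≤ ‖cutoffField P x‖ * (gradKernel ρ η (y - x) * ‖y - x‖) :=
        norm_inner_mul_gradKernel_le ρ η _ _
    _ ≤ P * (1 / (l * P / 2)) := by
        gcongr
        · exact mul_nonneg (gradKernel_nonneg ρ η _) (norm_nonneg _)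
        · exact norm_cutoffField_le hP x
        · exact (gradKernel_mul_norm_le ρ η _).trans
            (one_div_le_one_div_of_le (by positivity) hdist)
    _ = 2 / l := by field_simp

/-- The integrand of the logarithmic interaction energy, differentiated along `cutoffField P`. -/
noncomputable def interactionKernel (P ρ η : ℝ) (x y : E) : ℝ :=
  inner ℝ (cutoffField P x) (y - x) * gradKernel ρ η (y - x)

theorem interactionKernel_add_swap (P ρ η : ℝ) (x y : E) :
    interactionKernel P ρ η x y + interactionKernel P ρ η y x =
      -(inner ℝ (y - x) (cutoffField P y - cutoffField P x) * gradKernel ρ η (y - x)) := by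
  have hsymm : gradKernel ρ η (x - y) = gradKernel ρ η (y - x) := by
    rw [gradKernel, gradKernel, cutoff, cutoff, norm_sub_rev]
  rw [interactionKernel, interactionKernel, hsymm, ← neg_sub y x, inner_neg_right,
    inner_sub_right (y - x), real_inner_comm (y - x) (cutoffField P x),
    real_inner_comm (y - x) (cutoffField P y)]
  ring

theorem neg_le_interactionKernel_add_swap {P l : ℝ} (hP : 0 < P) (hl : 2 ≤ l) (ρ η : ℝ)
    (x y : E) :
    -((ball (0 : E) (l * P)).indicator 1 x * (ball (0 : E) (l * P)).indicator 1 y + 2 / l) ≤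
      interactionKernel P ρ η x y + interactionKernel P ρ η y x := by
  have hl0 : 0 ≤ 2 / l := by positivity
  have hlP : P ≤ l * P := le_mul_of_one_le_left hP.le (by linarith)
  have hfar : ∀ {x y : E}, y ∉ ball 0 (l * P) →
      -(2 / l) ≤ interactionKernel P ρ η x y + interactionKernel P ρ η y x := fun {x y} hy => by
    have hy' : l * P ≤ ‖y‖ := by simpa using hy
    have hzero : interactionKernel P ρ η y x = 0 := by
      rw [interactionKernel, cutoffField_eq_zero hP (hlP.trans hy'), inner_zero_left, zero_mul]
    rw [hzero, add_zero]
    exact (abs_le.1 (norm_inner_cutoffField_mul_gradKernel_le hP hl ρ η hy')).1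
  by_cases hx : x ∈ ball (0 : E) (l * P)
  · by_cases hy : y ∈ ball (0 : E) (l * P)
    · rw [Set.indicator_of_mem hx, Set.indicator_of_mem hy, interactionKernel_add_swap]
      simp only [Pi.one_apply]
      linarith [inner_sub_cutoffField_sub_mul_gradKernel_le_one P ρ η x y]
    · simpa [Set.indicator_of_notMem hy] using hfar (x := x) hy
  · simpa [Set.indicator_of_notMem hx, add_comm] using hfar (x := y) hx

theorem norm_interactionKernel_le {P : ℝ} (hP : 0 < P) (ρ : ℝ) {η : ℝ} (hη : 0 < η) (x y : E) :
    ‖interactionKernel P ρ η x y‖ ≤ P / η :=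
  calc ‖interactionKernel P ρ η x y‖
      ≤ ‖cutoffField P x‖ * (gradKernel ρ η (y - x) * ‖y - x‖) :=
        norm_inner_mul_gradKernel_le ρ η _ _
    _ ≤ P * (1 / η) := by
        gcongr
        · exact mul_nonneg (gradKernel_nonneg ρ η _) (norm_nonneg _)
        · exact norm_cutoffField_le hP x
        · exact gradKernel_mul_norm_le_of_pos ρ hη _
    _ = P / η := by ring

variable [MeasurableSpace E] [BorelSpace E] [SecondCountableTopology E]

theorem measurable_interactionKernel (P ρ η : ℝ) :
    Measurable fun p : E × E => interactionKernel P ρ η p.1 p.2 := by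
  unfold interactionKernel gradKernel cutoffField cutoff
  fun_prop

variable (μ : Measure E) [IsFiniteMeasure μ]

theorem neg_le_integral_integral_interactionKernel {P l : ℝ} (hP : 0 < P) (hl : 2 ≤ l) (ρ : ℝ)
    {η : ℝ} (hη : 0 < η) :
    -(1 / 2) * (μ.real (ball 0 (l * P)) ^ 2 + 2 / l * μ.real Set.univ ^ 2) ≤
      ∫ x, ∫ y, interactionKernel P ρ η x y ∂μ ∂μ := by
  have hint : Integrable (fun p : E × E => interactionKernel P ρ η p.1 p.2) (μ.prod μ) :=
    .of_bound (measurable_interactionKernel P ρ η).aestronglyMeasurable (P / η)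
      (.of_forall fun p => norm_interactionKernel_le hP ρ hη _ _)
  have hint' : Integrable (fun p : E × E => interactionKernel P ρ η p.2 p.1) (μ.prod μ) :=
    hint.swap
  have hprod : ∫ x, ∫ y, interactionKernel P ρ η x y ∂μ ∂μ =
      ∫ p, interactionKernel P ρ η p.1 p.2 ∂(μ.prod μ) := (integral_prod _ hint).symm
  have hswap : ∫ p, interactionKernel P ρ η p.2 p.1 ∂(μ.prod μ) =
      ∫ p, interactionKernel P ρ η p.1 p.2 ∂(μ.prod μ) :=
    integral_prod_swap fun p : E × E => interactionKernel P ρ η p.1 p.2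
  have hind : Integrable ((ball (0 : E) (l * P)).indicator (1 : E → ℝ)) μ :=
    (integrable_const (1 : ℝ)).indicator measurableSet_ball
  have hle : ∫ p : E × E, -((ball (0 : E) (l * P)).indicator 1 p.1 *
        (ball (0 : E) (l * P)).indicator 1 p.2 + 2 / l) ∂(μ.prod μ) ≤
      ∫ p : E × E, (interactionKernel P ρ η p.1 p.2 + interactionKernel P ρ η p.2 p.1)
        ∂(μ.prod μ) :=
    integral_mono ((hind.mul_prod hind).add (integrable_const _)).neg (hint.add hint')
      fun p => neg_le_interactionKernel_add_swap hP hl ρ η _ _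
  rw [integral_neg, integral_add (hind.mul_prod hind) (integrable_const _), integral_prod_mul,
    integral_indicator_one measurableSet_ball, integral_const, integral_add hint hint',
    ← Set.univ_prod_univ, measureReal_prod_prod, smul_eq_mul] at hle
  rw [hswap] at hle
  rw [hprod]
  linarith

end Symmetrization

/-! ### Measures of bounded density -/

theorem le_norm_sub_of_norm_add_le {E : Type*} [SeminormedAddCommGroup E] {x y : E} {ρ s : ℝ}
    (hx : ‖x‖ + ρ ≤ s) (hy : s ≤ ‖y‖) : ρ ≤ ‖y - x‖ := by
  linarith [norm_sub_norm_le y x]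

section BoundedDensity

theorem integrable_of_le_ofReal_smul {α : Type*} [MeasurableSpace α] {μ ν : Measure α} {b : ℝ}
    (hμ : μ ≤ ENNReal.ofReal b • ν) {g : α → ℝ} (hg : Integrable g ν) : Integrable g μ :=
  (hg.smul_measure ENNReal.ofReal_ne_top).mono_measure hμ

theorem integral_le_mul_integral_of_le_ofReal_smul {α : Type*} [MeasurableSpace α]
    {μ ν : Measure α} {b : ℝ} (hb : 0 ≤ b) (hμ : μ ≤ ENNReal.ofReal b • ν) {g : α → ℝ}
    (hg : Integrable g ν) (hg0 : ∀ y, 0 ≤ g y) : ∫ y, g y ∂μ ≤ b * ∫ y, g y ∂ν := by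
  calc ∫ y, g y ∂μ ≤ ∫ y, g y ∂(ENNReal.ofReal b • ν) :=
        integral_mono_measure hμ (.of_forall hg0) (hg.smul_measure ENNReal.ofReal_ne_top)
    _ = b * ∫ y, g y ∂ν := by rw [integral_smul_measure, ENNReal.toReal_ofReal hb, smul_eq_mul]

variable {μ : Measure E2} {b : ℝ}

theorem ae_sub_ne_zero (hμ : μ ≤ ENNReal.ofReal b • volume) (x : E2) : ∀ᵐ y ∂μ, y - x ≠ 0 := by
  have hac : μ ≪ volume := (Measure.absolutelyContinuous_of_le hμ).trans
    (Measure.smul_absolutelyContinuous)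
  filter_upwards [hac.ae_le (compl_mem_ae_iff.2 (measure_singleton x))] with y hy
  exact sub_ne_zero.2 hy

theorem integrable_truncInv_sub (hμ : μ ≤ ENNReal.ofReal b • volume) (x : E2) :
    Integrable (fun y => truncInv (y - x)) μ :=
  integrable_of_le_ofReal_smul hμ
    ((integrable_truncInv finrank_euclideanSpace_fin.ge volume).comp_sub_right x)

theorem integral_truncInv_sub_le (hb : 0 ≤ b) (hμ : μ ≤ ENNReal.ofReal b • volume) (x : E2) :
    ∫ y, truncInv (y - x) ∂μ ≤ b * ∫ z : E2, truncInv z := by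
  rw [← integral_sub_right_eq_self (truncInv : E2 → ℝ) x]
  exact integral_le_mul_integral_of_le_ofReal_smul hb hμ
    ((integrable_truncInv finrank_euclideanSpace_fin.ge volume).comp_sub_right x)
    fun y => truncInv_nonneg _

variable [IsFiniteMeasure μ]

theorem integrable_posLog_div_norm_sub (hμ : μ ≤ ENNReal.ofReal b • volume) (ρ : ℝ) (x : E2) :
    Integrable (fun y => Real.posLog (ρ / ‖y - x‖)) μ := by
  refine ((integrable_const (Real.posLog ρ)).add (integrable_truncInv_sub hμ x)).mono'
    (Measurable.aestronglyMeasurable (by unfold Real.posLog; fun_prop)) (.of_forall fun y => ?_)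
  rw [Real.norm_of_nonneg Real.posLog_nonneg, div_eq_mul_one_div]
  exact Real.posLog_mul.trans (add_le_add_right (posLog_one_div_norm_le_truncInv _) _)

theorem integrable_logKernel_sub (hμ : μ ≤ ENNReal.ofReal b • volume) {ρ η : ℝ} (hρ : 0 < ρ)
    (hη : 0 < η) (x : E2) : Integrable (fun y => logKernel ρ η (y - x)) μ := by
  refine (integrable_posLog_div_norm_sub hμ ρ x).mono'
    ((continuous_logKernel ρ hη).comp (by fun_prop)).aestronglyMeasurable ?_
  filter_upwards [ae_sub_ne_zero hμ x] with y hy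
  rw [Real.norm_of_nonneg (logKernel_nonneg hρ η _)]
  exact logKernel_le_posLog hρ hη hy

end BoundedDensity

/-! ### Rescaled solutions -/

/-- The quantities on which the final bound depends: `a` and `b` bound the potential (at the origin
and from above, respectively), `M` the total mass, and `C₁`, `C₂` the solution on two circles. -/
structure BlowUpBounds where
  (a b M C₁ C₂ : ℝ)
  a_pos : 0 < a
  b_pos : 0 < b
  M_pos : 0 < M
  C₁_pos : 0 < C₁
  C₂_pos : 0 < C₂

/-- A solution `w` of `-Δw = W e^{w - w(0)}` with maximum at the origin, on the ball of radius
`15 t` and with bounds `c`; `ω` bounds the oscillation of `W`. The function `w` is extended to a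
compactly supported `C²` function on the plane, so that Green's formula needs no boundary terms. -/
structure RescaledSolution (c : BlowUpBounds) (t ω : ℝ) (w W : E2 → ℝ) : Prop where
  one_le_t : 1 ≤ t
  contDiff : ContDiff ℝ 2 w
  hasCompactSupport : HasCompactSupport w
  nonneg : ∀ y ∈ ball (0 : E2) (15 * t), 0 ≤ w y
  le_apply_zero : ∀ y ∈ ball (0 : E2) (15 * t), w y ≤ w 0
  neg_lapl_eq : ∀ y ∈ ball (0 : E2) (15 * t), -lapl w y = W y * Real.exp (w y - w 0)
  potential_nonneg : ∀ y ∈ ball (0 : E2) (15 * t), 0 ≤ W y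
  potential_le : ∀ y ∈ ball (0 : E2) (15 * t), W y ≤ c.b
  abs_potential_sub_le : ∀ y ∈ ball (0 : E2) (15 * t), |W y - W 0| ≤ ω
  le_potential_zero : c.a ≤ W 0
  mass_le : ∫ y in ball (0 : E2) (15 * t), -lapl w y ≤ c.M
  inner_mass_le : ∫ y in ball (0 : E2) (8 * t), -lapl w y ≤ 8 * π + π / 2
  le_of_norm_eq : ∀ x : E2, ‖x‖ = t → w x ≤ c.C₁
  le_of_norm_eq_eight_mul : ∀ x : E2, ‖x‖ = 8 * t → w x ≤ c.C₂

/-- The Riesz measure `-Δw` on the ball of radius `15 t`. -/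
noncomputable def rieszMeasure (t : ℝ) (w : E2 → ℝ) : Measure E2 :=
  (volume.restrict (ball 0 (15 * t))).withDensity fun y => ENNReal.ofReal (-lapl w y)

namespace BlowUpBounds

/-- The constant in the bound `∫ w ≤ integralConst * t ^ 2` on the ball of radius `12 t`. -/
noncomputable def integralConst (c : BlowUpBounds) : ℝ :=
  2 * π * c.C₁ * ((196 / 6) * (196 / 27) ^ 2)

/-- Balls of radius `outerRatio * (4 * t)` around points of norm `8 t` have mass at most `π`. -/
noncomputable def outerRatio (c : BlowUpBounds) : ℝ := Real.exp (-(2 * c.C₂ + 3 / 2)) / 2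

theorem outerRatio_pos (c : BlowUpBounds) : 0 < c.outerRatio := by
  unfold outerRatio
  positivity

end BlowUpBounds

namespace RescaledSolution

variable {c : BlowUpBounds} {t ω : ℝ} {w W : E2 → ℝ}

section

variable (h : RescaledSolution c t ω w W)
include h

theorem t_pos : 0 < t := one_pos.trans_le h.one_le_t

theorem zero_mem : (0 : E2) ∈ ball 0 (15 * t) := mem_ball_self (by linarith [h.t_pos])

theorem neg_lapl_nonneg {y : E2} (hy : y ∈ ball (0 : E2) (15 * t)) : 0 ≤ -lapl w y := by
  rw [h.neg_lapl_eq y hy]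
  exact mul_nonneg (h.potential_nonneg y hy) (Real.exp_nonneg _)

theorem neg_lapl_le {y : E2} (hy : y ∈ ball (0 : E2) (15 * t)) : -lapl w y ≤ c.b := by
  rw [h.neg_lapl_eq y hy]
  exact (mul_le_of_le_one_right (h.potential_nonneg y hy)
    (Real.exp_le_one_iff.2 (sub_nonpos.2 (h.le_apply_zero y hy)))).trans (h.potential_le y hy)

theorem rieszMeasure_le : rieszMeasure t w ≤ ENNReal.ofReal c.b • volume := by
  rw [← withDensity_const, rieszMeasure, ← withDensity_indicator measurableSet_ball]
  exact withDensity_mono (.of_forall fun y => Set.indicator_le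
    (fun z hz => ENNReal.ofReal_le_ofReal (h.neg_lapl_le hz)) y)

theorem integral_rieszMeasure (g : E2 → ℝ) :
    ∫ y, g y ∂rieszMeasure t w = ∫ y in ball (0 : E2) (15 * t), -lapl w y * g y := by
  rw [rieszMeasure, integral_withDensity_eq_integral_toReal_smul
    (f := fun y => ENNReal.ofReal (-lapl w y))
    (continuous_lapl h.contDiff).neg.measurable.ennreal_ofReal (by simp)]
  refine setIntegral_congr_fun measurableSet_ball fun y hy => ?_
  simp only [ENNReal.toReal_ofReal (h.neg_lapl_nonneg hy), smul_eq_mul]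

theorem integrableOn_neg_lapl (s : ℝ) : IntegrableOn (fun y => -lapl w y) (ball 0 s) :=
  ((continuous_lapl h.contDiff).neg.locallyIntegrable.integrableOn_isCompact
    (isCompact_closedBall 0 s)).mono_set ball_subset_closedBall

theorem isFiniteMeasure_rieszMeasure : IsFiniteMeasure (rieszMeasure t w) :=
  isFiniteMeasure_withDensity_ofReal (h.integrableOn_neg_lapl (15 * t)).2

theorem rieszMeasure_real {S : Set E2} (hS : MeasurableSet S) (hS' : S ⊆ ball 0 (15 * t)) :
    (rieszMeasure t w).real S = ∫ y in S, -lapl w y := by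
  rw [← integral_indicator_one hS, h.integral_rieszMeasure, ← integral_indicator measurableSet_ball,
    ← integral_indicator hS]
  congr with y
  by_cases hy : y ∈ S
  · simp [hy, hS' hy]
  · simp [hy]

theorem rieszMeasure_real_univ_le : (rieszMeasure t w).real Set.univ ≤ c.M := by
  have hmass := h.integral_rieszMeasure fun _ => 1
  simp only [integral_const, smul_eq_mul, mul_one] at hmass
  exact hmass.trans_le h.mass_le

theorem rieszMeasure_real_le (S : Set E2) : (rieszMeasure t w).real S ≤ c.M :=
  have := h.isFiniteMeasure_rieszMeasure
  (measureReal_mono (Set.subset_univ S)).trans h.rieszMeasure_real_univ_le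

theorem rieszMeasure_real_inner_ball_le :
    (rieszMeasure t w).real (ball 0 (8 * t)) ≤ 8 * π + π / 2 := by
  rw [h.rieszMeasure_real measurableSet_ball (ball_subset_ball (by linarith [h.t_pos]))]
  exact h.inner_mass_le

theorem integral_mul_neg_lapl {g : E2 → ℝ} (hg : ∀ y, 15 * t ≤ ‖y‖ → g y = 0) :
    ∫ y, g y * -lapl w y = ∫ y, g y ∂rieszMeasure t w := by
  rw [h.integral_rieszMeasure, setIntegral_eq_integral_of_forall_compl_eq_zero fun y hy => by
    rw [hg y (by simpa using hy), mul_zero]]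
  simp only [mul_comm]

theorem integrable : Integrable w :=
  h.contDiff.continuous.integrable_of_hasCompactSupport h.hasCompactSupport

/-! ### The logarithmic potential -/

theorem kernel_mul_nonneg {F : E2 → ℝ} {ρ : ℝ} (hF : ∀ z, 0 ≤ F z)
    (hFρ : ∀ z, ρ ≤ ‖z‖ → F z = 0) {x : E2} (hx : ‖x‖ + ρ ≤ 15 * t) (y : E2) :
    0 ≤ F (y - x) * w y := by
  rcases le_or_gt (15 * t) ‖y‖ with hy | hy
  · rw [hFρ _ (le_norm_sub_of_norm_add_le hx hy), zero_mul]
  · exact mul_nonneg (hF _) (h.nonneg y (mem_ball_zero_iff.2 hy))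

theorem integral_bubbleKernel_eq {ρ η : ℝ} (hρ : 0 < ρ) (hη : 0 < η) {x : E2}
    (hx : ‖x‖ + ρ ≤ 15 * t) :
    ∫ y, bubbleKernel ρ η (y - x) * w y = (∫ y, remainderKernel ρ η (y - x) * w y) +
      ∫ y, logKernel ρ η (y - x) ∂rieszMeasure t w := by
  rw [green_representation ρ hη h.contDiff h.hasCompactSupport, h.integral_mul_neg_lapl]
  exact fun y hy => logKernel_eq_zero hρ η (le_norm_sub_of_norm_add_le hx hy)

theorem integral_logKernel_le {ρ η : ℝ} (hρ : 0 < ρ) (hη : 0 < η) {x : E2}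
    (hx : ‖x‖ + ρ ≤ 15 * t) :
    ∫ y, logKernel ρ η (y - x) ∂rieszMeasure t w ≤ ∫ y, bubbleKernel ρ η (y - x) * w y := by
  rw [h.integral_bubbleKernel_eq hρ hη hx]
  exact le_add_of_nonneg_left <| integral_nonneg <| h.kernel_mul_nonneg
    (remainderKernel_nonneg ρ η) (fun z => remainderKernel_eq_zero hρ η) hx

theorem integral_remainder_le {ρ : ℝ} (hρ : 0 < ρ) {x : E2} (hx : ‖x‖ + ρ ≤ 15 * t) :
    ∫ y, 6 / ρ ^ 2 * cutoff ρ (y - x) ^ 2 * w y ≤ 2 * π * w x := by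
  refine le_of_tendsto_of_tendsto
    (tendsto_integral_remainderKernel_sub_mul ρ x h.contDiff.continuous h.hasCompactSupport)
    (tendsto_integral_bubbleKernel_sub_mul ρ x h.contDiff.continuous h.hasCompactSupport)
    (eventually_mem_nhdsWithin.mono fun η hη => ?_)
  beta_reduce
  rw [h.integral_bubbleKernel_eq hρ hη hx]
  exact le_add_of_nonneg_right (integral_nonneg fun y => logKernel_nonneg hρ η _)

omit h in
theorem le_cutoff_of_norm_le {z : E2} (ht : 0 < t) (hz : ‖z‖ ≤ 13 * t) :
    27 / 196 ≤ cutoff (14 * t) z := by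
  have hratio : ‖z‖ ^ 2 / (14 * t) ^ 2 ≤ 169 / 196 := by
    rw [div_le_iff₀ (by positivity)]
    nlinarith [norm_nonneg z]
  exact le_max_of_le_left (by linarith)

theorem setIntegral_ball_le :
    ∫ y in ball (0 : E2) (12 * t), w y ≤ c.integralConst * t ^ 2 := by
  have ht := h.t_pos
  obtain ⟨x, hx⟩ : ∃ x : E2, ‖x‖ = t := ⟨EuclideanSpace.single 0 t, by simp [ht.le]⟩
  have hxρ : ‖x‖ + 14 * t ≤ 15 * t := by linarith
  have hcut : ∀ y ∈ ball (0 : E2) (12 * t), 27 / 196 ≤ cutoff (14 * t) (y - x) := fun y hy =>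
    le_cutoff_of_norm_le ht (by linarith [norm_sub_le y x, mem_ball_zero_iff.1 hy])
  have hcutw : Integrable fun y => 6 / (14 * t) ^ 2 * cutoff (14 * t) (y - x) ^ 2 * w y :=
    integrable_mul_of_hasCompactSupport_or _
      (continuous_const.mul (((continuous_cutoff _).comp (by fun_prop)).pow 2))
      h.contDiff.continuous (.inr h.hasCompactSupport)
  have hle : 6 / (14 * t) ^ 2 * (27 / 196) ^ 2 * ∫ y in ball (0 : E2) (12 * t), w y ≤
      2 * π * c.C₁ := by
    rw [← integral_const_mul]
    calc ∫ y in ball (0 : E2) (12 * t), 6 / (14 * t) ^ 2 * (27 / 196) ^ 2 * w y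
        ≤ ∫ y in ball (0 : E2) (12 * t), 6 / (14 * t) ^ 2 * cutoff (14 * t) (y - x) ^ 2 * w y := by
          refine setIntegral_mono_on (h.integrable.integrableOn.const_mul _) hcutw.integrableOn
            measurableSet_ball fun y hy => ?_
          have := h.nonneg y (ball_subset_ball (by linarith) hy)
          have := hcut y hy
          gcongr
      _ ≤ ∫ y, 6 / (14 * t) ^ 2 * cutoff (14 * t) (y - x) ^ 2 * w y :=
          setIntegral_le_integral hcutw (.of_forall (h.kernel_mul_nonneg
            (F := fun z => 6 / (14 * t) ^ 2 * cutoff (14 * t) z ^ 2)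
            (fun z => by positivity)
            (fun z hz => by simp [cutoff_eq_zero (by positivity : 0 < 14 * t) hz]) hxρ))
      _ ≤ 2 * π * w x := h.integral_remainder_le (by positivity) hxρ
      _ ≤ 2 * π * c.C₁ := by gcongr; exact h.le_of_norm_eq x hx
  calc ∫ y in ball (0 : E2) (12 * t), w y
      = (196 / 6) * (196 / 27) ^ 2 * t ^ 2 *
          (6 / (14 * t) ^ 2 * (27 / 196) ^ 2 * ∫ y in ball (0 : E2) (12 * t), w y) := by
        field_simp
        norm_num
    _ ≤ (196 / 6) * (196 / 27) ^ 2 * t ^ 2 * (2 * π * c.C₁) := by gcongr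
    _ = c.integralConst * t ^ 2 := by rw [BlowUpBounds.integralConst]; ring

theorem norm_integral_kernel_mul_le {F : E2 → ℝ} {B : ℝ}
    (hF : ∀ z, 4 * t ≤ ‖z‖ → F z = 0) (hFB : ∀ z, ‖F z‖ ≤ B) {x : E2} (hx : ‖x‖ ≤ 8 * t) :
    ‖∫ y, F (y - x) * w y‖ ≤ B * (c.integralConst * t ^ 2) := by
  have ht := h.t_pos
  calc ‖∫ y, F (y - x) * w y‖ = ‖∫ y in ball (0 : E2) (12 * t), F (y - x) * w y‖ := by
        rw [setIntegral_eq_integral_of_forall_compl_eq_zero fun y hy => ?_]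
        rw [hF _ (le_norm_sub_of_norm_add_le (by linarith : ‖x‖ + 4 * t ≤ 12 * t)
          (not_lt.1 (mt mem_ball_zero_iff.2 hy))), zero_mul]
    _ ≤ ∫ y in ball (0 : E2) (12 * t), B * w y := by
        refine norm_integral_le_of_norm_le (h.integrable.integrableOn.const_mul _)
          (ae_restrict_of_forall_mem measurableSet_ball fun y hy => ?_)
        have hwy := h.nonneg y (ball_subset_ball (by linarith) hy)
        rw [norm_mul, Real.norm_of_nonneg hwy]
        exact mul_le_mul_of_nonneg_right (hFB _) hwy
    _ ≤ B * (c.integralConst * t ^ 2) := by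
        rw [integral_const_mul]
        exact mul_le_mul_of_nonneg_left h.setIntegral_ball_le ((norm_nonneg _).trans (hFB 0))

theorem integral_remainderKernel_le (η : ℝ) {x : E2} (hx : ‖x‖ ≤ 8 * t) :
    ∫ y, remainderKernel (4 * t) η (y - x) * w y ≤ 6 / 16 * c.integralConst := by
  have ht := h.t_pos
  calc ∫ y, remainderKernel (4 * t) η (y - x) * w y
      ≤ 6 / (4 * t) ^ 2 * (c.integralConst * t ^ 2) :=
        (Real.le_norm_self _).trans <| h.norm_integral_kernel_mul_le
          (fun z => remainderKernel_eq_zero (by positivity) η) (fun z => by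
            rw [Real.norm_of_nonneg (remainderKernel_nonneg _ _ _)]
            exact remainderKernel_le _ _ _) hx
    _ = 6 / 16 * c.integralConst := by field_simp; norm_num; ring

theorem two_pi_mul_apply_le {x : E2} (hx : ‖x‖ ≤ 8 * t) :
    2 * π * w x ≤ 6 / 16 * c.integralConst +
      ∫ y, Real.posLog (4 * t / ‖y - x‖) ∂rieszMeasure t w := by
  have := h.isFiniteMeasure_rieszMeasure
  have hρ : 0 < 4 * t := by linarith [h.t_pos]
  refine le_of_tendsto
    (tendsto_integral_bubbleKernel_sub_mul (4 * t) x h.contDiff.continuous h.hasCompactSupport)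
    (eventually_mem_nhdsWithin.mono fun η hη => ?_)
  rw [h.integral_bubbleKernel_eq hρ hη (by linarith)]
  refine add_le_add (h.integral_remainderKernel_le η hx) (integral_mono_ae
    (integrable_logKernel_sub h.rieszMeasure_le hρ hη x)
    (integrable_posLog_div_norm_sub h.rieszMeasure_le _ x) ?_)
  filter_upwards [ae_sub_ne_zero h.rieszMeasure_le x] with y hy
  exact logKernel_le_posLog hρ hη hy

theorem integral_logKernel_zero_le :
    ∫ y, logKernel (4 * t) 1 y ∂rieszMeasure t w ≤ 2 * π * w 0 := by
  have hρ : 0 < 4 * t := by linarith [h.t_pos]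
  have hx : ‖(0 : E2)‖ + 4 * t ≤ 15 * t := by rw [norm_zero]; linarith [h.t_pos]
  have hw0 := h.nonneg 0 h.zero_mem
  have hbound : ∀ y, ‖(ball (0 : E2) (15 * t)).indicator w y‖ ≤ w 0 := fun y => by
    by_cases hy : y ∈ ball (0 : E2) (15 * t)
    · rw [Set.indicator_of_mem hy, Real.norm_of_nonneg (h.nonneg y hy)]
      exact h.le_apply_zero y hy
    · rwa [Set.indicator_of_notMem hy, norm_zero]
  calc ∫ y, logKernel (4 * t) 1 y ∂rieszMeasure t w
      ≤ ∫ y, bubbleKernel (4 * t) 1 (y - 0) * w y := by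
        simpa using h.integral_logKernel_le hρ one_pos hx
    _ = ∫ y, bubbleKernel (4 * t) 1 (y - 0) * (ball (0 : E2) (15 * t)).indicator w y := by
        congr with y
        by_cases hy : y ∈ ball (0 : E2) (15 * t)
        · rw [Set.indicator_of_mem hy]
        · have hzero := cutoff_eq_zero hρ
            (le_norm_sub_of_norm_add_le hx (not_lt.1 (mt mem_ball_zero_iff.2 hy)))
          rw [bubbleKernel, hzero, Set.indicator_of_notMem hy]
          simp only [ne_eq, OfNat.ofNat_ne_zero, not_false_eq_true, zero_pow, mul_zero, zero_div,
            zero_mul]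
    _ ≤ 2 * π * w 0 :=
        (Real.le_norm_self _).trans (norm_integral_bubbleKernel_sub_mul_le _ one_pos 0 hbound)

omit h in
theorem le_logKernel_of_norm_lt {ρ η : ℝ} (hρ : 0 < ρ) (hη : 0 < η) (hηρ : η < c.outerRatio * ρ)
    {z : E2} (hz : ‖z‖ < c.outerRatio * ρ) : 2 * c.C₂ ≤ logKernel ρ η z := by
  have hratio : Real.exp (2 * c.C₂ + 3 / 2) ≤ ρ / (‖z‖ + η) := by
    rw [le_div_iff₀ (by positivity)]
    calc Real.exp (2 * c.C₂ + 3 / 2) * (‖z‖ + η)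
        ≤ Real.exp (2 * c.C₂ + 3 / 2) * (2 * (c.outerRatio * ρ)) := by gcongr; linarith
      _ = ρ := by
        rw [BlowUpBounds.outerRatio, Real.exp_neg]
        field_simp
  have hlog := (Real.le_log_iff_exp_le (by positivity)).2 hratio
  have hpos : Real.log (ρ / (‖z‖ + η)) ≤ Real.posLog (ρ / (‖z‖ + η)) := le_max_right _ _
  linarith [posLog_le_logKernel hρ hη z]

theorem rieszMeasure_real_ball_le_pi {x : E2} (hx : ‖x‖ = 8 * t) :
    (rieszMeasure t w).real (ball x (c.outerRatio * (4 * t))) ≤ π := by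
  have := h.isFiniteMeasure_rieszMeasure
  have hρ : 0 < 4 * t := by linarith [h.t_pos]
  have hρ' : 0 < c.outerRatio * (4 * t) := mul_pos c.outerRatio_pos hρ
  have hle : 2 * c.C₂ * (rieszMeasure t w).real (ball x (c.outerRatio * (4 * t))) ≤
      2 * π * w x := by
    refine ge_of_tendsto
      (tendsto_integral_bubbleKernel_sub_mul (4 * t) x h.contDiff.continuous h.hasCompactSupport) ?_
    filter_upwards [Ioo_mem_nhdsGT hρ'] with η hη
    have hint := integrable_logKernel_sub h.rieszMeasure_le hρ hη.1 x
    calc 2 * c.C₂ * (rieszMeasure t w).real (ball x (c.outerRatio * (4 * t)))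
        = ∫ y in ball x (c.outerRatio * (4 * t)), 2 * c.C₂ ∂rieszMeasure t w := by
          rw [setIntegral_const, smul_eq_mul, mul_comm]
      _ ≤ ∫ y in ball x (c.outerRatio * (4 * t)), logKernel (4 * t) η (y - x) ∂rieszMeasure t w :=
          setIntegral_mono_on (integrable_const _) hint.integrableOn measurableSet_ball
            fun y hy => le_logKernel_of_norm_lt hρ hη.1 hη.2 (mem_ball_iff_norm.1 hy)
      _ ≤ ∫ y, logKernel (4 * t) η (y - x) ∂rieszMeasure t w :=
          setIntegral_le_integral hint (.of_forall fun y => logKernel_nonneg hρ η _)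
      _ ≤ ∫ y, bubbleKernel (4 * t) η (y - x) * w y :=
          h.integral_logKernel_le hρ hη.1 (by linarith)
  have hwx : 2 * π * w x ≤ 2 * c.C₂ * π := by
    nlinarith [h.le_of_norm_eq_eight_mul x hx, Real.pi_pos]
  exact le_of_mul_le_mul_left (hle.trans hwx) (by linarith [c.C₂_pos])

end

end RescaledSolution

/-! ### The gradient estimate -/

theorem integral_cutoff_sub_sq_mul_fderiv (ρ : ℝ) (x : E2) {w : E2 → ℝ} (hw : ContDiff ℝ 1 w)
    (hc : HasCompactSupport w) (e : E2) :
    ∫ y, cutoff ρ (y - x) ^ 2 * fderiv ℝ w y e =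
      ∫ y, 4 / ρ ^ 2 * cutoff ρ (y - x) * inner ℝ e (y - x) * w y := by
  have hderiv : ∀ y : E2, HasFDerivAt (fun y => cutoff ρ (y - x) ^ 2)
      (-(4 / ρ ^ 2 * cutoff ρ (y - x)) • innerSL ℝ (y - x)) y := fun y => by
    refine ((hasFDerivAt_comp_sub x).2 (hasFDerivAt_cutoff_pow ρ 0 (y - x))).congr_fderiv ?_
    norm_num
  have hsmooth : ContDiff ℝ 1 fun y : E2 => cutoff ρ (y - x) ^ 2 :=
    contDiff_one_iff_hasFDerivAt.2 ⟨_, by fun_prop, hderiv⟩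
  rw [integral_mul_fderiv_eq_neg_of_hasCompactSupport_or volume hsmooth hw (.inr hc),
    ← integral_neg]
  congr with y
  rw [(hderiv y).fderiv]
  simp only [smul_apply, innerSL_apply_apply, smul_eq_mul, real_inner_comm e (y - x)]
  ring

namespace BlowUpBounds

/-- The bound for the gradient of a rescaled solution on the ball of radius `8 t`. -/
noncomputable def gradConst (c : BlowUpBounds) : ℝ :=
  3 / 8 * c.integralConst + c.M + c.b * ∫ z : E2, truncInv z

/-- A lower bound for the mass of the unit ball. -/
noncomputable def coreMass (c : BlowUpBounds) : ℝ := π * (c.a / 2 * Real.exp (-c.gradConst))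

theorem integralConst_nonneg (c : BlowUpBounds) : 0 ≤ c.integralConst := by
  have := c.C₁_pos
  unfold integralConst
  positivity

theorem gradConst_nonneg (c : BlowUpBounds) : 0 ≤ c.gradConst := by
  have := c.integralConst_nonneg
  have := c.M_pos
  have := c.b_pos
  have : 0 ≤ ∫ z : E2, truncInv z := integral_nonneg truncInv_nonneg
  unfold gradConst
  positivity

theorem coreMass_pos (c : BlowUpBounds) : 0 < c.coreMass := by
  have := c.a_pos
  unfold coreMass
  positivity

end BlowUpBounds

namespace RescaledSolution

variable {c : BlowUpBounds} {t ω : ℝ} {w W : E2 → ℝ} (h : RescaledSolution c t ω w W)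
include h

theorem norm_integral_cutoff_mul_fderiv_le {x : E2} (hx : ‖x‖ ≤ 8 * t) (e : E2) :
    ‖∫ y, 6 / (4 * t) ^ 2 * cutoff (4 * t) (y - x) ^ 2 * fderiv ℝ w y e‖ ≤
      3 / 8 * c.integralConst * ‖e‖ / t := by
  have ht := h.t_pos
  have hkernel : ∀ z : E2,
      ‖4 / (4 * t) ^ 2 * cutoff (4 * t) z * inner ℝ e z‖ ≤ 4 / (4 * t) ^ 2 * (‖e‖ * (4 * t)) :=
    fun z => by
    rcases le_or_gt (4 * t) ‖z‖ with hz | hz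
    · rw [cutoff_eq_zero (by positivity) hz, mul_zero, zero_mul, norm_zero]
      positivity
    · rw [mul_assoc, norm_mul, norm_mul, Real.norm_of_nonneg (by positivity),
        Real.norm_of_nonneg (cutoff_nonneg _ z)]
      refine mul_le_mul_of_nonneg_left ?_ (by positivity)
      calc cutoff (4 * t) z * ‖inner ℝ e z‖ ≤ 1 * (‖e‖ * ‖z‖) :=
            mul_le_mul (cutoff_le_one _ z) (norm_inner_le_norm e z) (norm_nonneg _) zero_le_one
        _ ≤ ‖e‖ * (4 * t) := by rw [one_mul]; gcongr
  simp only [mul_assoc (6 / (4 * t) ^ 2)]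
  rw [integral_const_mul, integral_cutoff_sub_sq_mul_fderiv _ _
    (h.contDiff.of_le one_le_two) h.hasCompactSupport, norm_mul,
    Real.norm_of_nonneg (by positivity)]
  calc 6 / (4 * t) ^ 2 *
        ‖∫ y, 4 / (4 * t) ^ 2 * cutoff (4 * t) (y - x) * inner ℝ e (y - x) * w y‖
      ≤ 6 / (4 * t) ^ 2 *
        (4 / (4 * t) ^ 2 * (‖e‖ * (4 * t)) * (c.integralConst * t ^ 2)) := by
        gcongr
        exact h.norm_integral_kernel_mul_le
          (F := fun z => 4 / (4 * t) ^ 2 * cutoff (4 * t) z * inner ℝ e z)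
          (fun z hz => by rw [cutoff_eq_zero (by positivity) hz, mul_zero, zero_mul]) hkernel hx
    _ = 3 / 8 * c.integralConst * ‖e‖ / t := by field_simp; norm_num; ring

theorem tendsto_integral_inner_mul_gradKernel {x : E2} (hx : ‖x‖ ≤ 8 * t) (e : E2) :
    Tendsto (fun η => ∫ y, inner ℝ e (y - x) * gradKernel (4 * t) η (y - x) ∂rieszMeasure t w)
      (𝓝[>] 0) (𝓝 (2 * π * fderiv ℝ w x e -
        ∫ y, 6 / (4 * t) ^ 2 * cutoff (4 * t) (y - x) ^ 2 * fderiv ℝ w y e)) := by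
  have hρ : 0 < 4 * t := by linarith [h.t_pos]
  have hcont := (contDiff_one_fderiv_apply h.contDiff e).continuous
  have hsupp : HasCompactSupport fun y => fderiv ℝ w y e :=
    h.hasCompactSupport.fderiv_apply (𝕜 := ℝ) e
  refine ((tendsto_integral_bubbleKernel_sub_mul (4 * t) x hcont hsupp).sub
    (tendsto_integral_remainderKernel_sub_mul (4 * t) x hcont hsupp)).congr'
      (eventually_mem_nhdsWithin.mono fun η hη => ?_)
  rw [green_representation_fderiv (4 * t) hη h.contDiff h.hasCompactSupport x e,
    add_sub_cancel_left]
  refine h.integral_mul_neg_lapl fun y hy => ?_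
  rw [gradKernel_eq_zero hρ η (le_norm_sub_of_norm_add_le (by linarith) hy), mul_zero]

theorem norm_integral_inner_mul_gradKernel_le (ρ η : ℝ) (x e : E2) :
    ‖∫ y, inner ℝ e (y - x) * gradKernel ρ η (y - x) ∂rieszMeasure t w‖ ≤
      ‖e‖ * (c.M + c.b * ∫ z : E2, truncInv z) := by
  have := h.isFiniteMeasure_rieszMeasure
  have hint := integrable_truncInv_sub h.rieszMeasure_le x
  refine (norm_integral_le_of_norm_le (((integrable_const (1 : ℝ)).add hint).const_mul ‖e‖)
    (.of_forall fun y => ?_)).trans ?_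
  · exact (norm_inner_mul_gradKernel_le ρ η e _).trans (mul_le_mul_of_nonneg_left
      ((gradKernel_mul_norm_le ρ η _).trans (one_div_norm_le_one_add_truncInv _)) (norm_nonneg e))
  · simp only [Pi.add_apply]
    rw [integral_const_mul, integral_add (integrable_const _) hint, integral_const, smul_eq_mul,
      mul_one]
    gcongr
    · exact h.rieszMeasure_real_univ_le
    · exact integral_truncInv_sub_le c.b_pos.le h.rieszMeasure_le x

theorem norm_fderiv_le {x : E2} (hx : ‖x‖ ≤ 8 * t) : ‖fderiv ℝ w x‖ ≤ c.gradConst := by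
  refine ContinuousLinearMap.opNorm_le_bound _ c.gradConst_nonneg fun e => ?_
  have hmain := le_of_tendsto (h.tendsto_integral_inner_mul_gradKernel hx e).norm
    (.of_forall fun η => h.norm_integral_inner_mul_gradKernel_le (4 * t) η x e)
  have hcut : 3 / 8 * c.integralConst * ‖e‖ / t ≤ 3 / 8 * c.integralConst * ‖e‖ :=
    div_le_self (mul_nonneg (mul_nonneg (by norm_num) c.integralConst_nonneg) (norm_nonneg e))
      h.one_le_t
  calc ‖fderiv ℝ w x e‖ ≤ 2 * π * ‖fderiv ℝ w x e‖ :=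
        le_mul_of_one_le_left (norm_nonneg _) (by linarith [Real.pi_gt_three])
    _ = ‖2 * π * fderiv ℝ w x e‖ := by
        rw [norm_mul, Real.norm_of_nonneg Real.two_pi_pos.le]
    _ ≤ c.gradConst * ‖e‖ := by
        rw [BlowUpBounds.gradConst]
        linarith [norm_sub_norm_le (2 * π * fderiv ℝ w x e)
          (∫ y, 6 / (4 * t) ^ 2 * cutoff (4 * t) (y - x) ^ 2 * fderiv ℝ w y e),
          h.norm_integral_cutoff_mul_fderiv_le hx e]

theorem neg_gradConst_le_sub {y : E2} (hy : ‖y‖ ≤ 1) : -c.gradConst ≤ w y - w 0 := by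
  have hbound := (convex_closedBall (0 : E2) 1).norm_image_sub_le_of_norm_fderiv_le (𝕜 := ℝ)
    (fun x _ => h.contDiff.differentiable two_ne_zero x)
    (fun x hx => h.norm_fderiv_le (by linarith [mem_closedBall_zero_iff.1 hx, h.one_le_t]))
    (mem_closedBall_self zero_le_one) (mem_closedBall_zero_iff.2 hy)
  rw [sub_zero] at hbound
  exact (abs_le.1 (hbound.trans (mul_le_of_le_one_right c.gradConst_nonneg hy))).1

theorem coreMass_le (hω : ω ≤ c.a / 2) : c.coreMass ≤ (rieszMeasure t w).real (ball 0 1) := by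
  have hsub : ball (0 : E2) 1 ⊆ ball 0 (15 * t) := ball_subset_ball (by linarith [h.one_le_t])
  rw [h.rieszMeasure_real measurableSet_ball hsub]
  have hint := h.integrableOn_neg_lapl 1
  calc c.coreMass = ∫ _ in ball (0 : E2) 1, c.a / 2 * Real.exp (-c.gradConst) := by
        rw [setIntegral_const, Measure.real, EuclideanSpace.volume_ball_fin_two, smul_eq_mul,
          BlowUpBounds.coreMass]
        simp [Real.pi_pos.le]
    _ ≤ ∫ y in ball (0 : E2) 1, -lapl w y := by
        refine setIntegral_mono_on (integrableOn_const measure_ball_lt_top.ne) hint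
          measurableSet_ball fun y hy => ?_
        rw [h.neg_lapl_eq y (hsub hy)]
        gcongr
        · exact h.potential_nonneg y (hsub hy)
        · linarith [(abs_le.1 (h.abs_potential_sub_le y (hsub hy))).1, h.le_potential_zero]
        · exact h.neg_gradConst_le_sub (mem_ball_zero_iff.1 hy).le

end RescaledSolution

/-! ### The Pohozaev identity and the mass of a fixed ball -/

namespace RescaledSolution

variable {c : BlowUpBounds} {t ω : ℝ} {w W : E2 → ℝ}

section

variable (h : RescaledSolution c t ω w W)
include h

theorem continuous_fderiv_cutoffField (P : ℝ) :
    Continuous fun y => fderiv ℝ w y (cutoffField P y) :=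
  (h.contDiff.continuous_fderiv two_ne_zero).clm_apply (continuous_cutoffField P)

omit h in
theorem fderiv_cutoffField_eq_zero {P : ℝ} (hP : 0 < P) {y : E2} (hy : P ≤ ‖y‖) :
    fderiv ℝ w y (cutoffField P y) = 0 := by
  rw [cutoffField_eq_zero hP hy, map_zero]

theorem integral_fderiv_cutoffField_add_div_mul_exp {P : ℝ} (hP : 0 < P) :
    ∫ y, (fderiv ℝ w y (cutoffField P y) + cutoffFieldDiv P y) * Real.exp (w y - w 0) = 0 := by
  have hexp : ContDiff ℝ 1 fun y => Real.exp (w y - w 0) :=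
    ((h.contDiff.of_le one_le_two).sub contDiff_const).exp
  have hfderiv : ∀ y, fderiv ℝ (fun y => Real.exp (w y - w 0)) y (cutoffField P y) =
      fderiv ℝ w y (cutoffField P y) * Real.exp (w y - w 0) := fun y => by
    rw [fderiv_exp (((h.contDiff.differentiable two_ne_zero) y).sub_const _), fderiv_sub_const,
      smul_apply, smul_eq_mul, mul_comm]
  have hdiv := integral_fderiv_apply_cutoffField hP hexp
  simp only [hfderiv] at hdiv
  simp only [add_mul]
  rw [integral_add, hdiv, neg_add_cancel]
  · exact ((h.continuous_fderiv_cutoffField P).mul hexp.continuous).integrable_of_hasCompactSupport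
      (hasCompactSupport_of_eq_zero_of_le_norm fun y hy => by
        rw [Pi.mul_apply, fderiv_cutoffField_eq_zero hP hy, zero_mul])
  · exact ((continuous_cutoffFieldDiv P).mul hexp.continuous).integrable_of_hasCompactSupport
      (hasCompactSupport_of_eq_zero_of_le_norm fun y hy => by
        rw [Pi.mul_apply, cutoffFieldDiv_eq_zero hP hy, zero_mul])

theorem norm_fderiv_cutoffField_add_div_le {P : ℝ} (hP : 0 < P) {y : E2} (hy : ‖y‖ ≤ 8 * t) :
    ‖fderiv ℝ w y (cutoffField P y) + cutoffFieldDiv P y‖ ≤ c.gradConst * P + 2 :=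
  (norm_add_le _ _).trans <| add_le_add
    ((ContinuousLinearMap.le_opNorm _ _).trans <|
      mul_le_mul (h.norm_fderiv_le hy) (norm_cutoffField_le hP y) (norm_nonneg _)
        c.gradConst_nonneg)
    (abs_cutoffFieldDiv_le P y)

theorem integral_fderiv_cutoffField_add_div_le {P : ℝ} (hP : 0 < P) (hPt : P ≤ 8 * t) :
    ∫ y, fderiv ℝ w y (cutoffField P y) + cutoffFieldDiv P y ∂rieszMeasure t w ≤
      ω * (c.gradConst * P + 2) * (π * P ^ 2) := by
  set φ : E2 → ℝ := fun y => fderiv ℝ w y (cutoffField P y) + cutoffFieldDiv P y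
  have ht := h.t_pos
  have hzero : ∀ y, P ≤ ‖y‖ → φ y = 0 := fun y hy => by
    simp only [φ, cutoffFieldDiv_eq_zero hP hy, fderiv_cutoffField_eq_zero hP hy, add_zero]
  have hcont : Continuous φ :=
    (h.continuous_fderiv_cutoffField P).add (continuous_cutoffFieldDiv P)
  have hsupp : HasCompactSupport φ := hasCompactSupport_of_eq_zero_of_le_norm hzero
  have hint : ∀ {g : E2 → ℝ}, Continuous g → Integrable fun y => φ y * g y := fun hg =>
    integrable_mul_of_hasCompactSupport_or _ hcont hg (.inl hsupp)
  have hbound : ∀ y ∈ ball (0 : E2) P,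
      ‖φ y * (-lapl w y - W 0 * Real.exp (w y - w 0))‖ ≤ ω * (c.gradConst * P + 2) := by
    intro y hy
    have hyP : ‖y‖ ≤ 8 * t := (mem_ball_zero_iff.1 hy).le.trans hPt
    have hyt : y ∈ ball (0 : E2) (15 * t) := mem_ball_zero_iff.2 (by linarith)
    have hexp : Real.exp (w y - w 0) ≤ 1 :=
      Real.exp_le_one_iff.2 (sub_nonpos.2 (h.le_apply_zero y hyt))
    rw [h.neg_lapl_eq y hyt, ← sub_mul, norm_mul, norm_mul, Real.norm_of_nonneg (Real.exp_nonneg _),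
      mul_comm]
    have hosc := h.abs_potential_sub_le y hyt
    exact mul_le_mul ((mul_le_of_le_one_right (norm_nonneg _) hexp).trans hosc)
      (h.norm_fderiv_cutoffField_add_div_le hP hyP) (norm_nonneg _) ((abs_nonneg _).trans hosc)
  calc ∫ y, φ y ∂rieszMeasure t w = ∫ y, φ y * -lapl w y :=
        (h.integral_mul_neg_lapl fun y hy => hzero y (by linarith)).symm
    _ = ∫ y, φ y * (-lapl w y - W 0 * Real.exp (w y - w 0)) := by
        have hlapl : Integrable fun y => φ y * -lapl w y := hint (continuous_lapl h.contDiff).neg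
        have hexp : Integrable fun y => φ y * Real.exp (w y - w 0) :=
          hint (h.contDiff.continuous.sub continuous_const).rexp
        have hpohozaev : ∫ y, φ y * Real.exp (w y - w 0) = 0 :=
          h.integral_fderiv_cutoffField_add_div_mul_exp hP
        simp only [mul_sub, mul_left_comm _ (W 0)]
        rw [integral_sub hlapl (hexp.const_mul _), integral_const_mul, hpohozaev, mul_zero,
          sub_zero]
    _ = ∫ y in ball (0 : E2) P, φ y * (-lapl w y - W 0 * Real.exp (w y - w 0)) := by
        rw [setIntegral_eq_integral_of_forall_compl_eq_zero fun y hy => ?_]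
        rw [hzero y (not_lt.1 (mt mem_ball_zero_iff.2 hy)), zero_mul]
    _ ≤ ω * (c.gradConst * P + 2) * volume.real (ball (0 : E2) P) :=
        (Real.le_norm_self _).trans
          (norm_setIntegral_le_of_norm_le_const measure_ball_lt_top hbound)
    _ = ω * (c.gradConst * P + 2) * (π * P ^ 2) := by
        rw [Measure.real, EuclideanSpace.volume_ball_fin_two, ENNReal.toReal_mul,
          ENNReal.toReal_pow, ENNReal.toReal_ofReal hP.le, ENNReal.toReal_ofReal Real.pi_pos.le,
          mul_comm (P ^ 2)]

theorem tendsto_integral_interactionKernel {P : ℝ} (hP : 0 < P) (hPt : P ≤ 8 * t) (x : E2) :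
    Tendsto (fun η => ∫ y, interactionKernel P (4 * t) η x y ∂rieszMeasure t w) (𝓝[>] 0)
      (𝓝 (2 * π * fderiv ℝ w x (cutoffField P x) -
        ∫ y, 6 / (4 * t) ^ 2 * cutoff (4 * t) (y - x) ^ 2 * fderiv ℝ w y (cutoffField P x))) := by
  rcases le_or_gt ‖x‖ (8 * t) with hx | hx
  · exact h.tendsto_integral_inner_mul_gradKernel hx _
  · simp [interactionKernel, cutoffField_eq_zero hP (hPt.trans hx.le)]

theorem norm_integral_interactionKernel_le {P : ℝ} (hP : 0 < P) (ρ η : ℝ) (x : E2) :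
    ‖∫ y, interactionKernel P ρ η x y ∂rieszMeasure t w‖ ≤
      P * (c.M + c.b * ∫ z : E2, truncInv z) := by
  have := c.M_pos
  have := c.b_pos
  have : 0 ≤ ∫ z : E2, truncInv z := integral_nonneg truncInv_nonneg
  refine (h.norm_integral_inner_mul_gradKernel_le ρ η x _).trans ?_
  gcongr
  exact norm_cutoffField_le hP x

theorem neg_integral_cutoff_mul_fderiv_cutoffField_le {P : ℝ} (hP : 0 < P) (hPt : P ≤ 8 * t)
    (x : E2) :
    -∫ y, 6 / (4 * t) ^ 2 * cutoff (4 * t) (y - x) ^ 2 * fderiv ℝ w y (cutoffField P x) ≤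
      3 / 8 * c.integralConst * P / t := by
  have := h.t_pos
  have := c.integralConst_nonneg
  rcases le_or_gt ‖x‖ (8 * t) with hx | hx
  · refine (neg_le_abs _).trans ((h.norm_integral_cutoff_mul_fderiv_le hx _).trans ?_)
    gcongr
    exact norm_cutoffField_le hP x
  · simp only [cutoffField_eq_zero hP (hPt.trans hx.le), map_zero, mul_zero, integral_zero,
      neg_zero]
    positivity

theorem integrable_fderiv_cutoffField {P : ℝ} (hP : 0 < P) :
    Integrable (fun y => fderiv ℝ w y (cutoffField P y)) (rieszMeasure t w) :=
  integrable_of_le_ofReal_smul h.rieszMeasure_le <|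
    (h.continuous_fderiv_cutoffField P).integrable_of_hasCompactSupport <|
      hasCompactSupport_of_eq_zero_of_le_norm fun _ => fderiv_cutoffField_eq_zero hP

theorem neg_sq_le_integral_fderiv_cutoffField {P l : ℝ} (hP : 0 < P) (hPt : P ≤ 8 * t)
    (hl : 2 ≤ l) :
    -(1 / 2) * ((rieszMeasure t w).real (ball 0 (l * P)) ^ 2 + 2 / l * c.M ^ 2) ≤
      2 * π * ∫ x, fderiv ℝ w x (cutoffField P x) ∂rieszMeasure t w +
        3 / 8 * c.integralConst * P / t * c.M := by
  have := h.isFiniteMeasure_rieszMeasure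
  have := h.t_pos
  have := c.integralConst_nonneg
  set μ := rieszMeasure t w
  set R : E2 → ℝ := fun x =>
    ∫ y, 6 / (4 * t) ^ 2 * cutoff (4 * t) (y - x) ^ 2 * fderiv ℝ w y (cutoffField P x)
  have hlim := h.tendsto_integral_interactionKernel hP hPt
  have hmeas : ∀ η, AEStronglyMeasurable (fun x => ∫ y, interactionKernel P (4 * t) η x y ∂μ) μ :=
    fun η => (measurable_interactionKernel P (4 * t) η).stronglyMeasurable.integral_prod_right
      |>.aestronglyMeasurable
  have hbound := h.norm_integral_interactionKernel_le hP (4 * t)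
  have hw := (h.integrable_fderiv_cutoffField hP).const_mul (2 * π)
  have hlimit : Integrable (fun x => 2 * π * fderiv ℝ w x (cutoffField P x) - R x) μ :=
    .of_bound (aestronglyMeasurable_of_tendsto_ae _ hmeas (.of_forall hlim)) _
      (.of_forall fun x => le_of_tendsto (hlim x).norm (.of_forall fun η => hbound η x))
  have hM := h.rieszMeasure_real_univ_le
  calc -(1 / 2) * (μ.real (ball 0 (l * P)) ^ 2 + 2 / l * c.M ^ 2)
      ≤ -(1 / 2) * (μ.real (ball 0 (l * P)) ^ 2 + 2 / l * μ.real Set.univ ^ 2) :=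
        mul_le_mul_of_nonpos_left (by gcongr) (by norm_num)
    _ ≤ ∫ x, 2 * π * fderiv ℝ w x (cutoffField P x) - R x ∂μ :=
        ge_of_tendsto (tendsto_integral_filter_of_dominated_convergence _ (.of_forall hmeas)
          (.of_forall fun η => .of_forall (hbound η)) (integrable_const _) (.of_forall hlim))
          (eventually_mem_nhdsWithin.mono fun η hη =>
            neg_le_integral_integral_interactionKernel μ hP hl (4 * t) hη)
    _ ≤ ∫ x, 2 * π * fderiv ℝ w x (cutoffField P x) + 3 / 8 * c.integralConst * P / t ∂μ :=
        integral_mono hlimit (hw.add (integrable_const _)) fun x =>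
          add_le_add_right (h.neg_integral_cutoff_mul_fderiv_cutoffField_le hP hPt x) _
    _ ≤ 2 * π * ∫ x, fderiv ℝ w x (cutoffField P x) ∂μ +
        3 / 8 * c.integralConst * P / t * c.M := by
        rw [integral_add hw (integrable_const _), integral_const_mul, integral_const, smul_eq_mul,
          mul_comm (μ.real _)]
        gcongr

theorem mass_mul_le {R l : ℝ} (hR : 0 < R) (hl : 2 ≤ l) (hRt : l * R ≤ 8 * t) :
    (rieszMeasure t w).real (ball 0 R) * (8 * π - (rieszMeasure t w).real (ball 0 R)) / 2 ≤
      (8 * π * c.M + c.M ^ 2) / l +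
      (2 * π + c.M) * ((rieszMeasure t w).real (ball 0 (l ^ 2 * R)) -
        (rieszMeasure t w).real (ball 0 R)) +
      2 * π * (ω * (c.gradConst * (l * R) + 2) * (π * (l * R) ^ 2)) +
      3 / 8 * c.integralConst * (l * R) / t * c.M := by
  have := h.isFiniteMeasure_rieszMeasure
  have hP : 0 < l * R := by positivity
  have hl8 : 8 / l ^ 2 ≤ 4 / l := by
    rw [div_le_div_iff₀ (by positivity) (by positivity)]
    nlinarith
  have hmono : (rieszMeasure t w).real (ball 0 R) ≤ (rieszMeasure t w).real (ball 0 (l ^ 2 * R)) :=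
    measureReal_mono (ball_subset_ball (le_mul_of_one_le_left hR.le (by nlinarith)))
  have hsym := h.neg_sq_le_integral_fderiv_cutoffField hP hRt hl
  have hpoh := h.integral_fderiv_cutoffField_add_div_le hP hRt
  rw [integral_add (h.integrable_fderiv_cutoffField hP)
    (.of_bound (continuous_cutoffFieldDiv _).aestronglyMeasurable 2
      (.of_forall (abs_cutoffFieldDiv_le _)))] at hpoh
  have hdiv := le_integral_cutoffFieldDiv (rieszMeasure t w) hR (one_le_two.trans hl)
  have hM := h.rieszMeasure_real_le (ball 0 R)
  have hM' := h.rieszMeasure_real_le (ball 0 (l ^ 2 * R))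
  rw [show l * (l * R) = l ^ 2 * R by ring] at hsym
  set m := (rieszMeasure t w).real (ball 0 R)
  set m' := (rieszMeasure t w).real (ball 0 (l ^ 2 * R))
  have : 0 ≤ m := measureReal_nonneg
  have hloss : 8 / l ^ 2 * m ≤ 4 / l * c.M := by gcongr
  have hsq : m' ^ 2 ≤ m ^ 2 + 2 * c.M * (m' - m) := by nlinarith
  have hpoh' := mul_le_mul_of_nonneg_left (hdiv.trans (le_sub_iff_add_le'.2 hpoh))
    Real.two_pi_pos.le
  have hloss' := mul_le_mul_of_nonneg_left hloss Real.two_pi_pos.le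
  have : (8 * π * c.M + c.M ^ 2) / l = 2 * π * (4 / l * c.M) + 1 / 2 * (2 / l * c.M ^ 2) := by
    ring
  linarith

end

end RescaledSolution

theorem exists_succ_sub_le_div {F : ℕ → ℝ} {M : ℝ} {N : ℕ} (hN : N ≠ 0) (h : F N - F 0 ≤ M) :
    ∃ k < N, F (k + 1) - F k ≤ M / N := by
  obtain ⟨k, hk, hle⟩ := Finset.exists_le_of_sum_le (f := fun k => F (k + 1) - F k)
    (g := fun _ => M / N) (Finset.nonempty_range_iff.2 hN) (by
      rw [Finset.sum_range_sub, Finset.sum_const, Finset.card_range, nsmul_eq_mul]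
      field_simp
      exact h)
  exact ⟨k, Finset.mem_range.1 hk, hle⟩

theorem BlowUpBounds.exists_pohozaev_error_le (c : BlowUpBounds) {Q ε : ℝ} (hQ : 0 ≤ Q)
    (hε : 0 < ε) : ∃ κ > 0, ∀ t ω s : ℝ, 0 < t → 0 ≤ s → s ≤ Q → 1 / t ≤ κ → ω ≤ κ →
      2 * π * (ω * (c.gradConst * s + 2) * (π * s ^ 2)) +
        3 / 8 * c.integralConst * s / t * c.M ≤ ε := by
  have hM := c.M_pos
  have hG := c.gradConst_nonneg
  have hK := c.integralConst_nonneg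
  obtain ⟨κ, hκ, hκε⟩ := exists_pos_mul_lt hε
    (2 * π * (c.gradConst * Q + 2) * (π * Q ^ 2) + 3 / 8 * c.integralConst * Q * c.M)
  refine ⟨κ, hκ, fun t ω s ht₀ hs hsQ ht hω => ?_⟩
  calc 2 * π * (ω * (c.gradConst * s + 2) * (π * s ^ 2)) +
        3 / 8 * c.integralConst * s / t * c.M
    _ ≤ 2 * π * (κ * (c.gradConst * Q + 2) * (π * Q ^ 2)) +
        3 / 8 * c.integralConst * Q * κ * c.M := by
      rw [div_eq_mul_one_div _ t]
      gcongr
    _ ≤ ε := by linarith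

namespace RescaledSolution

variable {c : BlowUpBounds}

theorem exists_annulus_rieszMeasure_real_le {t ω : ℝ} {w W : E2 → ℝ}
    (h : RescaledSolution c t ω w W) {l : ℝ} (hl : 1 ≤ l) {N : ℕ} (hN : N ≠ 0) :
    ∃ R, 1 ≤ R ∧ l * R ≤ l ^ (2 * N) ∧
      (rieszMeasure t w).real (ball 0 (l ^ 2 * R)) - (rieszMeasure t w).real (ball 0 R) ≤
        c.M / N := by
  obtain ⟨k, hk, hle⟩ := exists_succ_sub_le_div
    (F := fun k => (rieszMeasure t w).real (ball 0 (l ^ (2 * k)))) hN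
    ((sub_le_self _ measureReal_nonneg).trans (h.rieszMeasure_real_le _))
  refine ⟨l ^ (2 * k), one_le_pow₀ hl, ?_, ?_⟩
  · rw [← pow_succ']
    exact pow_le_pow_right₀ hl (by lia)
  · rwa [← pow_add, show 2 + 2 * k = 2 * (k + 1) by ring]

theorem exists_le_rieszMeasure_real_ball (c : BlowUpBounds) :
    ∃ R ≥ 1, ∃ κ > 0, ∀ t ω w W, RescaledSolution c t ω w W → 1 / t ≤ κ → ω ≤ κ →
      15 / 2 * π ≤ (rieszMeasure t w).real (ball 0 R) := by
  have hM := c.M_pos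
  have ha := c.a_pos
  have hm₀ := c.coreMass_pos
  set β := c.coreMass * π / 16 with hβ_def
  have hβ : 0 < β := by positivity
  set l := max 2 ((8 * π * c.M + c.M ^ 2) / β)
  have hl : 2 ≤ l := le_max_left _ _
  obtain ⟨N, hN⟩ := exists_nat_gt ((2 * π + c.M) * c.M / β)
  have hN₀ : (0 : ℝ) < N := hN.trans_le' (by positivity)
  have hQ : 1 ≤ l ^ (2 * N) := one_le_pow₀ (one_le_two.trans hl)
  have hQ₀ : 0 < l ^ (2 * N) := by positivity
  obtain ⟨κ, hκ, hκβ⟩ := c.exists_pohozaev_error_le hQ₀.le hβ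
  refine ⟨l ^ (2 * N), hQ, min κ (min (c.a / 2) (1 / l ^ (2 * N))), by positivity,
    fun t ω w W h ht hω => ?_⟩
  have := h.isFiniteMeasure_rieszMeasure
  rw [le_min_iff, le_min_iff, one_div_le_one_div h.t_pos hQ₀] at ht
  rw [le_min_iff, le_min_iff] at hω
  obtain ⟨R, hR, hRQ, hRN⟩ :=
    h.exists_annulus_rieszMeasure_real_le (one_le_two.trans hl) (Nat.cast_pos.1 hN₀).ne'
  have hmain := h.mass_mul_le (one_pos.trans_le hR) hl (by linarith [h.t_pos])
  have hcore := (h.coreMass_le hω.2.1).trans (measureReal_mono (ball_subset_ball hR))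
  have hRl : R ≤ l * R := le_mul_of_one_le_left (by linarith) (by linarith)
  refine le_trans ?_ (measureReal_mono (ball_subset_ball (hRl.trans hRQ)))
  set m := (rieszMeasure t w).real (ball 0 R)
  have hl_term : (8 * π * c.M + c.M ^ 2) / l ≤ β :=
    (div_le_comm₀ (by positivity) hβ).2 (le_max_right _ _)
  have hN_term : (2 * π + c.M) * ((rieszMeasure t w).real (ball 0 (l ^ 2 * R)) - m) ≤ β :=
    calc (2 * π + c.M) * ((rieszMeasure t w).real (ball 0 (l ^ 2 * R)) - m)
      _ ≤ (2 * π + c.M) * (c.M / N) := by gcongr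
      _ ≤ β := by rw [← mul_div_assoc]; exact (div_le_comm₀ hN₀ hβ).2 hN.le
  have hκ_term := hκβ t ω (l * R) h.t_pos (by positivity) hRQ ht.1 hω.1
  by_contra! hlt
  have : c.coreMass * (π / 2) ≤ m * (8 * π - m) := by gcongr; linarith
  linarith

end RescaledSolution

/-! ### Decay away from the blow-up point -/

section

variable {E : Type*} [NormedAddCommGroup E]

theorem norm_sub_div_norm_smul [NormedSpace ℝ E] {x : E} {s : ℝ} (hx : x ≠ 0) (hs : ‖x‖ ≤ s) :
    ‖x - (s / ‖x‖) • x‖ = s - ‖x‖ := by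
  have hx' : 0 < ‖x‖ := norm_pos_iff.2 hx
  rw [show x - (s / ‖x‖) • x = (1 - s / ‖x‖) • x by module, norm_smul, Real.norm_eq_abs,
    abs_of_nonpos (sub_nonpos.2 ((one_le_div hx').2 hs))]
  field_simp
  ring

theorem posLog_div_norm_sub_le_of_norm_le {ρ R : ℝ} (hρ : 0 < ρ) {x y : E} (hx : 0 < ‖x‖)
    (hxρ : ‖x‖ ≤ 2 * ρ) (hyx : 2 * ‖y‖ ≤ ‖x‖) (hyR : ‖y‖ ≤ R) :
    Real.posLog (ρ / ‖y - x‖) ≤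
      Real.posLog (ρ / (‖y‖ + 1)) + (Real.log 2 + Real.log (R + 1) - Real.log ‖x‖) := by
  have hsub : ‖x‖ / 2 ≤ ‖y - x‖ := by linarith [norm_sub_norm_le x y, norm_sub_rev x y]
  have hle : Real.posLog (ρ / ‖y - x‖) ≤ Real.log (ρ / (‖x‖ / 2)) := by
    rw [← Real.posLog_eq_log (x := ρ / (‖x‖ / 2))]
    · gcongr
    · rw [abs_of_pos (by positivity), one_le_div (by positivity)]
      linarith
  have hR : 0 < R + 1 := by linarith [norm_nonneg y]
  have hge : Real.log (ρ / (R + 1)) ≤ Real.posLog (ρ / (‖y‖ + 1)) :=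
    (le_max_right 0 _).trans (Real.posLog_le_posLog (by positivity) (by gcongr))
  rw [Real.log_div hρ.ne' (by positivity), Real.log_div hx.ne' two_ne_zero] at hle
  rw [Real.log_div hρ.ne' hR.ne'] at hge
  linarith

theorem posLog_div_norm_sub_le (ρ : ℝ) (x y : E) :
    Real.posLog (ρ / ‖y - x‖) ≤
      Real.posLog (ρ / (‖y‖ + 1)) + Real.posLog ((‖y‖ + 1) / ‖y - x‖) := by
  rw [← div_mul_div_cancel₀ (by positivity : ‖y‖ + 1 ≠ 0) (a := ρ) (c := ‖y - x‖)]
  exact Real.posLog_mul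

theorem posLog_norm_add_one_div_le_of_norm_sub_le {x y : E} (hx : 2 ≤ ‖x‖)
    (hyx : ‖y - x‖ ≤ ‖x‖ / 2) :
    Real.posLog ((‖y‖ + 1) / ‖y - x‖) ≤ Real.log 2 + Real.log ‖x‖ + truncInv (y - x) := by
  rw [div_eq_mul_one_div, ← Real.log_mul two_ne_zero (by linarith), ← Real.posLog_eq_log
    (by rw [abs_of_pos (by linarith)]; linarith)]
  refine Real.posLog_mul.trans (add_le_add (Real.posLog_le_posLog (by positivity) ?_)
    (posLog_one_div_norm_le_truncInv _))
  linarith [norm_sub_norm_le y x]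

theorem posLog_norm_add_one_div_le_of_le_norm_sub {l : ℝ} (hl : 0 < l) {x y : E} (hx : 1 ≤ ‖x‖)
    (hyx : l * ‖x‖ ≤ ‖y - x‖) :
    Real.posLog ((‖y‖ + 1) / ‖y - x‖) ≤ Real.log (1 + 2 / l) := by
  have hpos : 0 < ‖y - x‖ := hyx.trans_lt' (by positivity)
  rw [← Real.posLog_eq_log (x := 1 + 2 / l)
    (by rw [abs_of_pos (by positivity)]; linarith [div_pos two_pos hl])]
  refine Real.posLog_le_posLog (by positivity) ?_
  have hxl : ‖x‖ ≤ ‖y - x‖ / l := by rwa [le_div_iff₀ hl, mul_comm]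
  rw [div_le_iff₀ hpos, show (1 + 2 / l) * ‖y - x‖ = ‖y - x‖ + 2 * (‖y - x‖ / l) by ring]
  linarith [norm_sub_norm_le y x]

end

theorem log_mul_rpow_neg_le {x : ℝ} (hx : 1 ≤ x) :
    Real.log x * x ^ (-(13 / 4) : ℝ) ≤ 32 * (1 + x) ^ (-(3 : ℝ)) := by
  have hx₀ : 0 < x := by linarith
  have h_rpow : x ^ (-(3 : ℝ)) ≤ 8 * (1 + x) ^ (-(3 : ℝ)) :=
    calc x ^ (-(3 : ℝ)) = 8 * (2 * x) ^ (-(3 : ℝ)) := by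
          rw [Real.mul_rpow two_pos.le hx₀.le, Real.rpow_neg two_pos.le]
          norm_num
          ring
      _ ≤ 8 * (1 + x) ^ (-(3 : ℝ)) := by
          gcongr 8 * ?_
          exact Real.rpow_le_rpow_of_nonpos (by positivity) (by linarith) (by norm_num)
  calc Real.log x * x ^ (-(13 / 4) : ℝ)
      ≤ x ^ (1 / 4 : ℝ) / (1 / 4) * x ^ (-(13 / 4) : ℝ) := by
        gcongr
        exact Real.log_le_rpow_div hx₀.le (by norm_num)
    _ = 4 * x ^ (-(3 : ℝ)) := by
        rw [div_mul_eq_mul_div, ← Real.rpow_add hx₀]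
        norm_num
        ring
    _ ≤ 32 * (1 + x) ^ (-(3 : ℝ)) := by linarith

namespace BlowUpBounds

/-- Balls of radius `nearRatio * ‖x‖` around a point `x` away from the origin have mass at
most `π`. -/
noncomputable def nearRatio (c : BlowUpBounds) : ℝ := c.outerRatio / 4

theorem nearRatio_pos (c : BlowUpBounds) : 0 < c.nearRatio := div_pos c.outerRatio_pos four_pos

theorem nearRatio_le_one_half (c : BlowUpBounds) : c.nearRatio ≤ 1 / 2 := by
  have : Real.exp (-(2 * c.C₂ + 3 / 2)) ≤ 1 := Real.exp_le_one_iff.2 (by linarith [c.C₂_pos])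
  rw [nearRatio, outerRatio]
  linarith

/-- The constant in the decay estimate `w x - w 0 ≤ decayConst R - 13 / 4 * log ‖x‖`. -/
noncomputable def decayConst (c : BlowUpBounds) (R : ℝ) : ℝ :=
  (6 / 16 * c.integralConst + (3 / 2 + Real.log 2 + Real.log (1 + 2 / c.nearRatio)) * c.M +
    (Real.log 2 + Real.log (R + 1)) * c.M + c.b * ∫ z : E2, truncInv z) / (2 * π)

end BlowUpBounds

namespace RescaledSolution

variable {c : BlowUpBounds} {t ω R : ℝ} {w W : E2 → ℝ}

section

variable (h : RescaledSolution c t ω w W) (hR : 1 ≤ R)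
  (hmass : 15 / 2 * π ≤ (rieszMeasure t w).real (ball 0 R))
  {x : E2} (hRx : 2 * R ≤ ‖x‖) (hx : ‖x‖ ≤ 8 * t)
include h hR hmass hRx hx

theorem rieszMeasure_real_near_ball_le :
    (rieszMeasure t w).real (ball x (c.nearRatio * ‖x‖)) ≤ π := by
  have := h.isFiniteMeasure_rieszMeasure
  have ht := h.t_pos
  have hx₀ : 0 < ‖x‖ := by linarith
  have hl := c.nearRatio_le_one_half
  rcases le_or_gt ((1 + c.nearRatio) * ‖x‖) (8 * t) with hin | hout
  · have hsub : ball x (c.nearRatio * ‖x‖) ⊆ ball 0 (8 * t) \ ball 0 R := fun y hy => by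
      rw [mem_ball_iff_norm] at hy
      rw [Set.mem_sdiff, mem_ball_zero_iff, mem_ball_zero_iff, not_lt]
      constructor
      · linarith [norm_sub_norm_le y x]
      · nlinarith [norm_sub_norm_le x y, norm_sub_rev x y]
    calc (rieszMeasure t w).real (ball x (c.nearRatio * ‖x‖))
      _ ≤ (rieszMeasure t w).real (ball 0 (8 * t) \ ball 0 R) := measureReal_mono hsub
      _ ≤ π := by
        rw [measureReal_sdiff (ball_subset_ball (by linarith)) measurableSet_ball]
        linarith [h.rieszMeasure_real_inner_ball_le]
  · refine (measureReal_mono (ball_subset_ball' ?_)).trans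
      (h.rieszMeasure_real_ball_le_pi (x := (8 * t / ‖x‖) • x) ?_)
    · rw [dist_eq_norm, norm_sub_div_norm_smul (norm_pos_iff.1 hx₀) hx]
      rw [show c.outerRatio = 4 * c.nearRatio by rw [BlowUpBounds.nearRatio]; ring]
      nlinarith [c.nearRatio_pos]
    · rw [norm_smul, Real.norm_of_nonneg (by positivity), div_mul_cancel₀ _ hx₀.ne']

omit h hmass in
theorem posLog_le_logKernel_add (y : E2) :
    Real.posLog (4 * t / ‖y - x‖) ≤ logKernel (4 * t) 1 y +
      ((3 / 2 + Real.log 2 + Real.log (1 + 2 / c.nearRatio)) +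
        (ball 0 R).indicator (fun _ => Real.log 2 + Real.log (R + 1) - Real.log ‖x‖) y +
        (ball x (c.nearRatio * ‖x‖)).indicator (fun _ => Real.log ‖x‖) y + truncInv (y - x)) := by
  have hker := posLog_le_logKernel (by linarith : 0 < 4 * t) one_pos y
  have hlog2 : 0 ≤ Real.log 2 := Real.log_nonneg one_le_two
  have hlogl : 0 ≤ Real.log (1 + 2 / c.nearRatio) :=
    Real.log_nonneg (le_add_of_nonneg_right (div_pos two_pos c.nearRatio_pos).le)
  have hlogx : 0 ≤ Real.log ‖x‖ := Real.log_nonneg (by linarith)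
  have htrunc := truncInv_nonneg (y - x)
  have hnear : 0 ≤ (ball x (c.nearRatio * ‖x‖)).indicator (fun _ => Real.log ‖x‖) y :=
    Set.indicator_nonneg (fun _ _ => hlogx) y
  by_cases hyR : y ∈ ball 0 R
  · have hy := mem_ball_zero_iff.1 hyR
    rw [Set.indicator_of_mem hyR]
    linarith [posLog_div_norm_sub_le_of_norm_le (ρ := 4 * t) (x := x) (y := y) (by linarith)
      (by linarith) (by linarith) (by linarith) hy.le]
  rw [Set.indicator_of_notMem hyR]
  have hsplit := posLog_div_norm_sub_le (4 * t) x y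
  by_cases hyx : y ∈ ball x (c.nearRatio * ‖x‖)
  · rw [Set.indicator_of_mem hyx]
    have hy : ‖y - x‖ ≤ ‖x‖ / 2 := (mem_ball_iff_norm.1 hyx).le.trans
      (by nlinarith [norm_nonneg x, c.nearRatio_le_one_half])
    linarith [posLog_norm_add_one_div_le_of_norm_sub_le (by linarith) hy]
  · rw [mem_ball_iff_norm, not_lt] at hyx
    linarith [posLog_norm_add_one_div_le_of_le_norm_sub c.nearRatio_pos (by linarith) hyx]

theorem integral_posLog_le :
    ∫ y, Real.posLog (4 * t / ‖y - x‖) ∂rieszMeasure t w ≤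
      (∫ y, logKernel (4 * t) 1 y ∂rieszMeasure t w) +
        ((3 / 2 + Real.log 2 + Real.log (1 + 2 / c.nearRatio)) * c.M +
          ((Real.log 2 + Real.log (R + 1)) * c.M - 15 / 2 * π * Real.log ‖x‖) +
          π * Real.log ‖x‖ + c.b * ∫ z : E2, truncInv z) := by
  have := h.isFiniteMeasure_rieszMeasure
  have hle := h.rieszMeasure_le
  have hker : Integrable (logKernel (4 * t) 1) (rieszMeasure t w) := by
    simpa only [sub_zero] using
      integrable_logKernel_sub hle (by linarith : 0 < 4 * t) one_pos (0 : E2)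
  have htrunc := integrable_truncInv_sub hle x
  have hinner : Integrable ((ball (0 : E2) R).indicator
      fun _ => Real.log 2 + Real.log (R + 1) - Real.log ‖x‖) (rieszMeasure t w) :=
    (integrable_const _).indicator measurableSet_ball
  have hnear : Integrable ((ball x (c.nearRatio * ‖x‖)).indicator fun _ => Real.log ‖x‖)
      (rieszMeasure t w) := (integrable_const _).indicator measurableSet_ball
  have hconst := integrable_const (μ := rieszMeasure t w)
    (3 / 2 + Real.log 2 + Real.log (1 + 2 / c.nearRatio))
  have hsum := ((hconst.add hinner).add hnear).add htrunc
  have hmono := integral_mono (integrable_posLog_div_norm_sub hle (4 * t) x) (hker.add hsum)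
    (posLog_le_logKernel_add hR hRx hx)
  rw [integral_add' hker hsum, integral_add' ((hconst.add hinner).add hnear) htrunc,
    integral_add' (hconst.add hinner) hnear, integral_add' hconst hinner,
    integral_indicator_const _ measurableSet_ball, integral_indicator_const _ measurableSet_ball,
    integral_const] at hmono
  simp only [smul_eq_mul] at hmono
  have hlogx : 0 ≤ Real.log ‖x‖ := Real.log_nonneg (by linarith)
  have hlogR : 0 ≤ Real.log (R + 1) := Real.log_nonneg (by linarith)
  have hlog2 : 0 ≤ Real.log 2 := Real.log_nonneg one_le_two
  have hlogl : 0 ≤ Real.log (1 + 2 / c.nearRatio) :=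
    Real.log_nonneg (le_add_of_nonneg_right (div_pos two_pos c.nearRatio_pos).le)
  refine hmono.trans (add_le_add_right (add_le_add (add_le_add (add_le_add ?_ ?_) ?_) ?_) _)
  · rw [mul_comm]
    gcongr
    exact h.rieszMeasure_real_univ_le
  · nlinarith [mul_le_mul_of_nonneg_left (h.rieszMeasure_real_le (ball 0 R))
      (add_nonneg hlog2 hlogR), mul_le_mul_of_nonneg_right hmass hlogx]
  · gcongr
    exact h.rieszMeasure_real_near_ball_le hR hmass hRx hx
  · exact integral_truncInv_sub_le c.b_pos.le hle x

theorem apply_sub_apply_zero_le : w x - w 0 ≤ c.decayConst R - 13 / 4 * Real.log ‖x‖ := by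
  have hpot := h.two_pi_mul_apply_le hx
  have hzero := h.integral_logKernel_zero_le
  have hdiff := h.integral_posLog_le hR hmass hRx hx
  have hdecay : 2 * π * c.decayConst R = 6 / 16 * c.integralConst +
      (3 / 2 + Real.log 2 + Real.log (1 + 2 / c.nearRatio)) * c.M +
      (Real.log 2 + Real.log (R + 1)) * c.M + c.b * ∫ z : E2, truncInv z := by
    rw [BlowUpBounds.decayConst]
    field_simp
  refine le_of_mul_le_mul_left (a := 2 * π) ?_ (by positivity)
  linarith

/-! ### The logarithmic moment -/

theorem log_norm_mul_neg_lapl_le_of_le_norm :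
    Real.log ‖x‖ * -lapl w x ≤
      32 * c.b * Real.exp (c.decayConst R) * (1 + ‖x‖) ^ (-(3 : ℝ)) := by
  have hx₁ : 1 ≤ ‖x‖ := by linarith
  have hx15 : x ∈ ball (0 : E2) (15 * t) := mem_ball_zero_iff.2 (by linarith)
  have hexp : Real.exp (w x - w 0) ≤ Real.exp (c.decayConst R) * ‖x‖ ^ (-(13 / 4) : ℝ) := by
    rw [Real.rpow_def_of_pos (by linarith), ← Real.exp_add, Real.exp_le_exp]
    linarith [h.apply_sub_apply_zero_le hR hmass hRx hx]
  have hb := c.b_pos.le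
  calc Real.log ‖x‖ * -lapl w x
    _ = Real.log ‖x‖ * (W x * Real.exp (w x - w 0)) := by rw [h.neg_lapl_eq x hx15]
    _ ≤ Real.log ‖x‖ * (c.b * (Real.exp (c.decayConst R) * ‖x‖ ^ (-(13 / 4) : ℝ))) := by
      have hlog : 0 ≤ Real.log ‖x‖ := Real.log_nonneg hx₁
      gcongr
      exact h.potential_le x hx15
    _ = c.b * Real.exp (c.decayConst R) * (Real.log ‖x‖ * ‖x‖ ^ (-(13 / 4) : ℝ)) := by ring
    _ ≤ c.b * Real.exp (c.decayConst R) * (32 * (1 + ‖x‖) ^ (-(3 : ℝ))) := by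
      exact mul_le_mul_of_nonneg_left (log_mul_rpow_neg_le hx₁) (by positivity)
    _ = 32 * c.b * Real.exp (c.decayConst R) * (1 + ‖x‖) ^ (-(3 : ℝ)) := by ring

omit hRx in
theorem log_norm_mul_neg_lapl_le :
    Real.log ‖x‖ * -lapl w x ≤ Real.log (2 * R) * -lapl w x +
      32 * c.b * Real.exp (c.decayConst R) * (1 + ‖x‖) ^ (-(3 : ℝ)) := by
  have hb := c.b_pos.le
  have hlapl : 0 ≤ -lapl w x := h.neg_lapl_nonneg (mem_ball_zero_iff.2 (by linarith [h.t_pos]))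
  have hlogR : 0 ≤ Real.log (2 * R) := Real.log_nonneg (by linarith)
  rcases le_total ‖x‖ (2 * R) with hx2R | hx2R
  · have hlog : Real.log ‖x‖ ≤ Real.log (2 * R) := by
      rcases (norm_nonneg x).eq_or_lt with hx₀ | hx₀
      · rwa [← hx₀, Real.log_zero]
      · exact Real.log_le_log hx₀ hx2R
    exact le_add_of_le_of_nonneg (mul_le_mul_of_nonneg_right hlog hlapl) (by positivity)
  · exact le_add_of_nonneg_of_le (mul_nonneg hlogR hlapl)
      (h.log_norm_mul_neg_lapl_le_of_le_norm hR hmass hx2R hx)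

end

theorem exists_setIntegral_log_norm_mul_le (c : BlowUpBounds) :
    ∃ κ > 0, ∃ C, ∀ t ω w W, RescaledSolution c t ω w W → 1 / t ≤ κ → ω ≤ κ →
      ∫ θ in ball (0 : E2) (8 * t),
        1 / (2 * π) * Real.log ‖θ‖ * (W θ * Real.exp (w θ - w 0)) ≤ C := by
  obtain ⟨R, hR, κ, hκ, hmass⟩ := exists_le_rieszMeasure_real_ball c
  set K := 32 * c.b * Real.exp (c.decayConst R)
  have hb := c.b_pos.le
  have hM := c.M_pos.le
  have hlogR : 0 ≤ Real.log (2 * R) := Real.log_nonneg (by linarith)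
  have hpow : Integrable fun θ : E2 => (1 + ‖θ‖) ^ (-(3 : ℝ)) :=
    integrable_one_add_norm (by rw [finrank_euclideanSpace_fin]; norm_num)
  set I₃ := ∫ θ : E2, (1 + ‖θ‖) ^ (-(3 : ℝ))
  have : 0 ≤ I₃ := integral_nonneg fun θ => by positivity
  refine ⟨κ, hκ, 1 / (2 * π) * (Real.log (2 * R) * c.M + K * I₃), fun t ω w W h ht hω => ?_⟩
  have ht₀ := h.t_pos
  have hsub : ball (0 : E2) (8 * t) ⊆ ball 0 (15 * t) := ball_subset_ball (by linarith)
  by_cases hint : IntegrableOn (fun θ => 1 / (2 * π) * Real.log ‖θ‖ *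
      (W θ * Real.exp (w θ - w 0))) (ball 0 (8 * t))
  swap
  · rw [integral_undef hint]
    positivity
  have hlapl := h.integrableOn_neg_lapl (8 * t)
  calc ∫ θ in ball (0 : E2) (8 * t), 1 / (2 * π) * Real.log ‖θ‖ * (W θ * Real.exp (w θ - w 0))
    _ ≤ ∫ θ in ball (0 : E2) (8 * t),
        1 / (2 * π) * (Real.log (2 * R) * -lapl w θ + K * (1 + ‖θ‖) ^ (-(3 : ℝ))) := by
      refine setIntegral_mono_on hint
        (((hlapl.const_mul _).add (hpow.integrableOn.const_mul _)).const_mul _)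
        measurableSet_ball fun θ hθ => ?_
      rw [mul_assoc, ← h.neg_lapl_eq θ (hsub hθ)]
      gcongr
      exact h.log_norm_mul_neg_lapl_le hR (hmass t ω w W h ht hω) (mem_ball_zero_iff.1 hθ).le
    _ ≤ 1 / (2 * π) * (Real.log (2 * R) * c.M + K * I₃) := by
      rw [integral_const_mul, integral_add (hlapl.const_mul _) (hpow.integrableOn.const_mul _),
        integral_const_mul, integral_const_mul, ← h.rieszMeasure_real measurableSet_ball hsub]
      gcongr
      · exact h.rieszMeasure_real_le _
      · exact setIntegral_le_integral hpow (.of_forall fun θ => by positivity)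

end RescaledSolution

/-! ### The minimum principle -/

theorem zero_le_deriv_deriv_of_isLocalMin {g : ℝ → ℝ} {x : ℝ} (h : IsLocalMin g x)
    (hg : ContinuousAt g x) : 0 ≤ deriv (deriv g) x := by
  by_contra! hneg
  have hconst : g =ᶠ[𝓝 x] fun _ => g x :=
    (isLocalMax_of_deriv_deriv_neg hneg h.deriv_eq_zero hg).mp (h.mono fun _ => ge_antisymm)
  have hzero := hconst.deriv.deriv_eq
  rw [deriv_const', deriv_const] at hzero
  exact hneg.ne hzero

theorem zero_le_fderiv_fderiv_apply_of_isLocalMin {E : Type*} [NormedAddCommGroup E]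
    [NormedSpace ℝ E] {u : E → ℝ} {x : E} (h : IsLocalMin u x) (hu : ContDiffAt ℝ 2 u x) (e : E) :
    0 ≤ fderiv ℝ (fun y => fderiv ℝ u y e) x e := by
  let p : ℝ → E := fun s => x + s • e
  have hp : ∀ s, HasDerivAt p e s := fun s => by
    simpa [p, id_def] using ((hasDerivAt_id s).smul_const e).const_add x
  have hp0 : p 0 = x := by simp [p]
  have hpx : Tendsto p (𝓝 0) (𝓝 x) := hp0 ▸ (hp 0).continuousAt.tendsto
  have hderiv : ∀ᶠ s in 𝓝 (0 : ℝ), HasDerivAt (u ∘ p) (fderiv ℝ u (p s) e) s := by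
    filter_upwards [hpx.eventually (hu.eventually (by simp))] with s hs
    exact (hs.differentiableAt two_ne_zero).hasFDerivAt.comp_hasDerivAt s (hp s)
  have hdiff : DifferentiableAt ℝ (fun y => fderiv ℝ u y e) (p 0) := by
    rw [hp0]
    exact ((hu.fderiv_right (m := 1) (by norm_num)).differentiableAt one_ne_zero).clm_apply
      (differentiableAt_const e)
  have hsecond : deriv (deriv (u ∘ p)) 0 = fderiv ℝ (fun y => fderiv ℝ u y e) x e := by
    have hcomp : deriv (fun s => fderiv ℝ u (p s) e) 0 =
        fderiv ℝ (fun y => fderiv ℝ u y e) (p 0) e :=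
      (hdiff.hasFDerivAt.comp_hasDerivAt 0 (hp 0)).deriv
    rw [EventuallyEq.deriv_eq (hderiv.mono fun s hs => hs.deriv), hcomp, hp0]
  have hmin : IsLocalMin (u ∘ p) 0 := IsMinFilter.comp_tendsto (by rwa [hp0]) hpx
  exact hsecond ▸ zero_le_deriv_deriv_of_isLocalMin hmin hderiv.self_of_nhds.continuousAt

theorem fderiv_fderiv_apply_sub_mul_norm_sq {E : Type*} [NormedAddCommGroup E]
    [InnerProductSpace ℝ E] {u : E → ℝ} {x : E} (hu : ContDiffAt ℝ 2 u x) (ε : ℝ) (e : E) :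
    fderiv ℝ (fun y => fderiv ℝ (fun z => u z - ε * ‖z‖ ^ 2) y e) x e =
      fderiv ℝ (fun y => fderiv ℝ u y e) x e - 2 * ε * ‖e‖ ^ 2 := by
  have hnorm : Differentiable ℝ fun z : E => ‖z‖ ^ 2 :=
    (contDiff_norm_sq ℝ (n := 1)).differentiable one_ne_zero
  have hfirst : (fun y => fderiv ℝ (fun z => u z - ε * ‖z‖ ^ 2) y e) =ᶠ[𝓝 x]
      fun y => fderiv ℝ u y e - 2 * ε * inner ℝ e y := by
    filter_upwards [hu.eventually (by simp)] with y hy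
    rw [fderiv_fun_sub (hy.differentiableAt two_ne_zero) ((hnorm y).const_mul ε),
      fderiv_const_mul (hnorm y), fderiv_norm_sq_apply]
    simp only [sub_apply, smul_apply, innerSL_apply_apply, smul_eq_mul, nsmul_eq_mul,
      Nat.cast_ofNat, real_inner_comm e y]
    ring
  have hdiff : DifferentiableAt ℝ (fun y => fderiv ℝ u y e) x :=
    ((hu.fderiv_right (m := 1) (by norm_num)).differentiableAt one_ne_zero).clm_apply
      (differentiableAt_const e)
  have hinner : HasFDerivAt (fun y => inner ℝ e y) (innerSL ℝ e) x := (innerSL ℝ e).hasFDerivAt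
  rw [hfirst.fderiv_eq, fderiv_fun_sub hdiff (hinner.differentiableAt.const_mul _),
    fderiv_const_mul hinner.differentiableAt, hinner.fderiv, sub_apply, smul_apply,
    innerSL_apply_apply, real_inner_self_eq_norm_sq, smul_eq_mul]

theorem zero_le_lapl_of_isLocalMin {u : E2 → ℝ} {x : E2} (h : IsLocalMin u x)
    (hu : ContDiffAt ℝ 2 u x) : 0 ≤ lapl u x :=
  add_nonneg (zero_le_fderiv_fderiv_apply_of_isLocalMin h hu _)
    (zero_le_fderiv_fderiv_apply_of_isLocalMin h hu _)

theorem lapl_sub_mul_norm_sq {u : E2 → ℝ} {x : E2} (hu : ContDiffAt ℝ 2 u x) (ε : ℝ) :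
    lapl (fun y => u y - ε * ‖y‖ ^ 2) x = lapl u x - 4 * ε := by
  have hpd := fun j : Fin 2 =>
    fderiv_fderiv_apply_sub_mul_norm_sq hu ε (EuclideanSpace.single j (1 : ℝ))
  simp only [PiLp.norm_single, norm_one, one_pow, mul_one] at hpd
  unfold lapl pd
  rw [hpd, hpd]
  ring

theorem nonneg_of_lapl_nonpos {Ω : Set E2} (hΩ : IsOpen Ω) (hΩb : Bornology.IsBounded Ω)
    {u : E2 → ℝ} (hu : ContDiffOn ℝ 2 u Ω) (huc : ContinuousOn u (closure Ω))
    (hlapl : ∀ x ∈ Ω, lapl u x ≤ 0) (hbdry : ∀ x ∈ frontier Ω, 0 ≤ u x) {x : E2} (hx : x ∈ Ω) :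
    0 ≤ u x := by
  obtain ⟨R, hR⟩ := hΩb.closure.exists_norm_le
  suffices hperturb : ∀ ε > 0, 0 ≤ u x + ε * (R ^ 2 + 1) by
    refine le_of_forall_pos_le_add fun ε hε => ?_
    have h := hperturb (ε / (R ^ 2 + 1)) (by positivity)
    rwa [div_mul_cancel₀ ε (by positivity)] at h
  intro ε hε
  obtain ⟨z, hz, hmin⟩ := hΩb.isCompact_closure.exists_isMinOn ⟨x, subset_closure hx⟩
    (f := fun y => u y - ε * ‖y‖ ^ 2) (huc.sub (by fun_prop))
  have hzx : u z - ε * ‖z‖ ^ 2 ≤ u x - ε * ‖x‖ ^ 2 := hmin (subset_closure hx)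
  by_cases hzΩ : z ∈ Ω
  · have hzcd : ContDiffAt ℝ 2 u z := hu.contDiffAt (hΩ.mem_nhds hzΩ)
    have hloc := hmin.isLocalMin (mem_of_superset (hΩ.mem_nhds hzΩ) subset_closure)
    have hnonneg := zero_le_lapl_of_isLocalMin hloc (hzcd.sub
      (contDiffAt_const.mul (contDiff_norm_sq ℝ).contDiffAt))
    rw [lapl_sub_mul_norm_sq hzcd] at hnonneg
    linarith [hlapl z hzΩ]
  · have hzR : ε * ‖z‖ ^ 2 ≤ ε * R ^ 2 := by gcongr; exact hR z hz
    have hxε : 0 ≤ ε * ‖x‖ ^ 2 := by positivity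
    linarith [hbdry z (hΩ.frontier_eq ▸ ⟨hz, hzΩ⟩)]

/-! ### The distance to the boundary -/

section InfDist

variable {E : Type*} [NormedAddCommGroup E] [NormedSpace ℝ E] {Ω : Set E} {x : E}

theorem infDist_frontier_pos [Nontrivial E] (hΩ : IsOpen Ω) (hΩb : Bornology.IsBounded Ω)
    (hx : x ∈ Ω) : 0 < infDist x (frontier Ω) := by
  have hne : (frontier Ω).Nonempty := nonempty_frontier_iff.2
    ⟨⟨x, hx⟩, fun h => NormedSpace.unbounded_univ ℝ E (h ▸ hΩb)⟩
  exact (isClosed_frontier.notMem_iff_infDist_pos hne).1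
    ((disjoint_frontier_iff_isOpen.2 hΩ).notMem_of_mem_right hx)

theorem ball_infDist_frontier_subset [FiniteDimensional ℝ E] [Nontrivial E]
    (hΩb : Bornology.IsBounded Ω) (hx : x ∈ Ω) : ball x (infDist x (frontier Ω)) ⊆ Ω := by
  obtain ⟨y, hy, hxy⟩ := exists_mem_frontier_infDist_compl_eq_dist hx fun h =>
    NormedSpace.unbounded_univ ℝ E (h ▸ hΩb)
  exact (ball_subset_ball (hxy ▸ infDist_le_dist_of_mem hy)).trans ball_infDist_compl_subset

end InfDist

/-! ### Rescaling -/

theorem exists_contDiff_hasCompactSupport_eqOn_ball {E : Type*} [NormedAddCommGroup E]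
    [NormedSpace ℝ E] [HasContDiffBump E] [FiniteDimensional ℝ E] {n : ℕ∞} {f : E → ℝ} {x : E}
    {s R : ℝ} (hs : 0 < s) (hsR : s < R) (hf : ContDiffOn ℝ n f (ball x R)) :
    ∃ g : E → ℝ, ContDiff ℝ n g ∧ HasCompactSupport g ∧ Set.EqOn g f (ball x s) := by
  obtain ⟨s', hss', hs'R⟩ := exists_between hsR
  let χ : ContDiffBump x := ⟨s, s', hs, hss'⟩
  refine ⟨fun y => χ y * f y, contDiff_iff_contDiffAt.2 fun y => ?_,
    χ.hasCompactSupport.mul_right, fun y hy => ?_⟩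
  · by_cases hy : y ∈ tsupport χ
    · rw [χ.tsupport_eq] at hy
      exact χ.contDiffAt.mul
        (hf.contDiffAt (isOpen_ball.mem_nhds (closedBall_subset_ball hs'R hy)))
    · refine contDiffAt_const (c := (0 : ℝ)) |>.congr_of_eventuallyEq ?_
      filter_upwards [notMem_tsupport_iff_eventuallyEq.1 hy] with z hz
      rw [hz, Pi.zero_apply, zero_mul]
  · simp only [χ.one_of_mem_closedBall (ball_subset_closedBall hy), one_mul]

theorem add_smul_mem_ball {E : Type*} [SeminormedAddCommGroup E] [NormedSpace ℝ E] {x θ : E}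
    {r ρ : ℝ} (hr : 0 < r) (hθ : θ ∈ ball 0 ρ) : x + r • θ ∈ ball x (r * ρ) := by
  rw [mem_ball_iff_norm, add_sub_cancel_left, norm_smul, Real.norm_of_nonneg hr.le]
  exact mul_lt_mul_of_pos_left (mem_ball_zero_iff.1 hθ) hr

theorem pow_smul_setIntegral_ball_comp_add_smul {E F : Type*} [NormedAddCommGroup E]
    [NormedSpace ℝ E] [FiniteDimensional ℝ E] [MeasurableSpace E] [BorelSpace E]
    [NormedAddCommGroup F] [NormedSpace ℝ F] (μ : Measure E) [μ.IsAddHaarMeasure] (f : E → F)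
    (x : E) {r : ℝ} (hr : 0 < r) (ρ : ℝ) :
    r ^ Module.finrank ℝ E • ∫ θ in ball 0 ρ, f (x + r • θ) ∂μ = ∫ y in ball x (r * ρ), f y ∂μ := by
  rw [Measure.setIntegral_comp_smul_of_pos μ (fun z => f (x + z)) _ hr,
    _root_.smul_ball hr.ne', smul_zero, smul_inv_smul₀ (pow_ne_zero _ hr.ne'),
    Real.norm_of_nonneg hr.le, ← (measurePreserving_add_left μ x).setIntegral_preimage_emb
      (MeasurableEquiv.addLeft x).measurableEmbedding f (ball x (r * ρ)), preimage_add_ball,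
    sub_self]

theorem lapl_congr {f g : E2 → ℝ} {y : E2} (h : f =ᶠ[𝓝 y] g) : lapl f y = lapl g y := by
  have hpd : ∀ (j : Fin 2) {f g : E2 → ℝ}, f =ᶠ[𝓝 y] g → pd j f =ᶠ[𝓝 y] pd j g :=
    fun j f g h => (h.fderiv (𝕜 := ℝ)).mono fun z hz => by rw [pd, hz, pd]
  rw [lapl, lapl, (hpd 0 (hpd 0 h)).eq_of_nhds, (hpd 1 (hpd 1 h)).eq_of_nhds]

/-- A solution `u` of `-Δu = V e^u` with maximum at the center of the ball `B(x, δ)`, with bounds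
`c`; `ω` bounds the oscillation of `V`. The bubble at `x` has width `e^{-u(x)/2}`. -/
structure ConcentratedSolution (c : BlowUpBounds) (δ ω : ℝ) (x : E2) (u V : E2 → ℝ) : Prop where
  width_le : 16 * Real.exp (-u x / 2) ≤ δ
  contDiffOn : ContDiffOn ℝ 2 u (ball x δ)
  nonneg : ∀ y ∈ ball x δ, 0 ≤ u y
  le_apply_center : ∀ y ∈ ball x δ, u y ≤ u x
  neg_lapl_eq : ∀ y ∈ ball x δ, -lapl u y = V y * Real.exp (u y)
  potential_nonneg : ∀ y ∈ ball x δ, 0 ≤ V y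
  potential_le : ∀ y ∈ ball x δ, V y ≤ c.b
  abs_potential_sub_le : ∀ y ∈ ball x δ, |V y - V x| ≤ ω
  le_potential_center : c.a ≤ V x
  mass_le : ∫ y in ball x (15 * δ / 16), V y * Real.exp (u y) ≤ c.M
  inner_mass_le : ∫ y in ball x (δ / 2), V y * Real.exp (u y) ≤ 8 * π + π / 2
  le_of_norm_eq : ∀ y : E2, ‖y‖ = 1 / 16 → u (x + δ • y) ≤ c.C₁
  le_of_norm_eq_one_half : ∀ y : E2, ‖y‖ = 1 / 2 → u (x + δ • y) ≤ c.C₂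

namespace ConcentratedSolution

section

variable {c : BlowUpBounds} {δ ω t r : ℝ} {x : E2} {u V w : E2 → ℝ}
  (h : ConcentratedSolution c δ ω x u V) (hr : r = Real.exp (-u x / 2)) (hδ : δ = 16 * r * t)

include hr in
theorem width_pos : 0 < r := hr ▸ Real.exp_pos _

include h hr hδ

theorem one_le_radius : 1 ≤ t := by
  have hwidth := h.width_le
  rw [← hr, hδ] at hwidth
  nlinarith [width_pos hr]

theorem add_smul_mem_ball_radius {θ : E2} (hθ : θ ∈ ball 0 (15 * t)) : x + r • θ ∈ ball x δ :=
  ball_subset_ball (by nlinarith [width_pos hr, h.one_le_radius hr hδ])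
    (add_smul_mem_ball (width_pos hr) hθ)

theorem exists_contDiff_eqOn :
    ∃ w : E2 → ℝ, ContDiff ℝ 2 w ∧ HasCompactSupport w ∧
      Set.EqOn w (fun θ => u (x + r • θ)) (ball 0 (15 * t)) := by
  have ht := h.one_le_radius hr hδ
  have hsmooth : ContDiffOn ℝ 2 (fun θ => u (x + r • θ)) (ball 0 (16 * t)) :=
    h.contDiffOn.comp (by fun_prop) fun θ hθ =>
      ball_subset_ball (by linarith) (add_smul_mem_ball (width_pos hr) hθ)
  exact exists_contDiff_hasCompactSupport_eqOn_ball (by linarith) (by linarith) hsmooth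

variable (hw : Set.EqOn w (fun θ => u (x + r • θ)) (ball 0 (15 * t)))
include hw

theorem rescaled_apply_zero : w 0 = u x := by
  simpa only [smul_zero, add_zero] using
    hw (mem_ball_self (by linarith [h.one_le_radius hr hδ]) : (0 : E2) ∈ ball 0 (15 * t))

theorem neg_lapl_rescaled {θ : E2} (hθ : θ ∈ ball 0 (15 * t)) :
    -lapl w θ = r ^ 2 * (V (x + r • θ) * Real.exp (u (x + r • θ))) := by
  rw [lapl_congr (hw.eventuallyEq_of_mem (isOpen_ball.mem_nhds hθ)), lapl_comp_add_smul,
    ← h.neg_lapl_eq _ (h.add_smul_mem_ball_radius hr hδ hθ)]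
  ring

theorem setIntegral_neg_lapl_rescaled {ρ : ℝ} (hρ : ρ ≤ 15 * t) :
    ∫ θ in ball 0 ρ, -lapl w θ = ∫ y in ball x (r * ρ), V y * Real.exp (u y) := by
  rw [← pow_smul_setIntegral_ball_comp_add_smul volume _ x (width_pos hr) ρ,
    finrank_euclideanSpace_fin, smul_eq_mul, ← integral_const_mul]
  exact setIntegral_congr_fun measurableSet_ball fun θ hθ =>
    h.neg_lapl_rescaled hr hδ hw (ball_subset_ball hρ hθ)

theorem rescaled_le_of_norm_eq {ρ C : ℝ} (hρ : ρ < 15)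
    (hC : ∀ y : E2, ‖y‖ = ρ / 16 → u (x + δ • y) ≤ C) {θ : E2} (hθ : ‖θ‖ = ρ * t) : w θ ≤ C := by
  have ht := h.one_le_radius hr hδ
  have hrpos := width_pos hr
  have hδpos : 0 < δ := by rw [hδ]; positivity
  have hnorm : ‖(r / δ) • θ‖ = ρ / 16 := by
    rw [norm_smul, Real.norm_of_nonneg (by positivity), hθ, hδ]
    field_simp
  rw [hw (mem_ball_zero_iff.2 (by rw [hθ]; gcongr))]
  simpa only [smul_smul, mul_div_cancel₀ r hδpos.ne'] using hC _ hnorm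

theorem rescaledSolution (hw2 : ContDiff ℝ 2 w) (hwc : HasCompactSupport w) :
    RescaledSolution c t ω w fun θ => V (x + r • θ) := by
  have ht := h.one_le_radius hr hδ
  have hmem := fun θ => h.add_smul_mem_ball_radius hr hδ (θ := θ)
  have hw0 := h.rescaled_apply_zero hr hδ hw
  have hmass := fun ρ => h.setIntegral_neg_lapl_rescaled hr hδ hw (ρ := ρ)
  refine
  { one_le_t := ht
    contDiff := hw2
    hasCompactSupport := hwc
    nonneg := fun θ hθ => hw hθ ▸ h.nonneg _ (hmem θ hθ)
    le_apply_zero := fun θ hθ => hw0 ▸ hw hθ ▸ h.le_apply_center _ (hmem θ hθ)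
    neg_lapl_eq := fun θ hθ => ?_
    potential_nonneg := fun θ hθ => h.potential_nonneg _ (hmem θ hθ)
    potential_le := fun θ hθ => h.potential_le _ (hmem θ hθ)
    abs_potential_sub_le := fun θ hθ => by
      simpa using h.abs_potential_sub_le _ (hmem θ hθ)
    le_potential_zero := by simpa using h.le_potential_center
    mass_le := ?_
    inner_mass_le := ?_
    le_of_norm_eq := fun θ hθ => h.rescaled_le_of_norm_eq hr hδ hw (ρ := 1) (by norm_num)
      h.le_of_norm_eq (by rw [hθ, one_mul])
    le_of_norm_eq_eight_mul := fun θ hθ => h.rescaled_le_of_norm_eq hr hδ hw (by norm_num)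
      (fun y hy => h.le_of_norm_eq_one_half y (by rw [hy]; norm_num)) hθ }
  · have hr2 : r ^ 2 = Real.exp (-u x) := by
      rw [hr, ← Real.exp_nat_mul]
      ring_nf
    rw [h.neg_lapl_rescaled hr hδ hw hθ, hw hθ, hw0, hr2, sub_eq_add_neg, Real.exp_add]
    ring
  · rw [hmass _ le_rfl, show r * (15 * t) = 15 * δ / 16 by rw [hδ]; ring]
    exact h.mass_le
  · rw [hmass _ (by linarith), show r * (8 * t) = δ / 2 by rw [hδ]; ring]
    exact h.inner_mass_le

end

theorem exists_setIntegral_log_norm_mul_le (c : BlowUpBounds) :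
    ∃ κ > 0, ∃ C, ∀ (δ ω r : ℝ) (x : E2) (u V : E2 → ℝ), ConcentratedSolution c δ ω x u V →
      r = Real.exp (-u x / 2) → 16 * (r / δ) ≤ κ → ω ≤ κ →
        ∫ θ in ball 0 (δ / (2 * r)), 1 / (2 * π) * Real.log ‖θ‖ *
          (V (x + r • θ) * Real.exp (u (x + r • θ) - u x)) ≤ C := by
  obtain ⟨κ, hκ, C, hC⟩ := RescaledSolution.exists_setIntegral_log_norm_mul_le c
  refine ⟨κ, hκ, C, fun δ ω r x u V h hr hδκ hωκ => ?_⟩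
  have hrpos := width_pos hr
  obtain ⟨t, hδ⟩ : ∃ t, δ = 16 * r * t := ⟨δ / (16 * r), by field_simp⟩
  have ht := h.one_le_radius hr hδ
  obtain ⟨w, hw2, hwc, hw⟩ := h.exists_contDiff_eqOn hr hδ
  refine le_trans (le_of_eq ?_) (hC t ω w _ (h.rescaledSolution hr hδ hw hw2 hwc) ?_ hωκ)
  · rw [show δ / (2 * r) = 8 * t by rw [hδ]; field_simp; ring]
    refine setIntegral_congr_fun measurableSet_ball fun θ hθ => ?_
    simp only [hw (ball_subset_ball (by linarith) hθ), h.rescaled_apply_zero hr hδ hw]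
  · convert hδκ using 1
    rw [hδ]
    field_simp

end ConcentratedSolution

/-! ### The uniform bound -/

theorem setIntegral_mul_le_mul_of_setIntegral_le {α : Type*} [MeasurableSpace α] {μ : Measure α}
    {s Ω : Set α} {V f : α → ℝ} {B D : ℝ} (hs : MeasurableSet s) (hsΩ : s ⊆ Ω)
    (hf : IntegrableOn f Ω μ) (hf0 : ∀ y, 0 ≤ f y) (hB : 0 ≤ B) (hV : ∀ y ∈ s, 0 ≤ V y)
    (hVB : ∀ y ∈ s, V y ≤ B) (hD : ∫ y in Ω, f y ∂μ ≤ D) : ∫ y in s, V y * f y ∂μ ≤ B * D := by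
  calc ∫ y in s, V y * f y ∂μ ≤ ∫ y in s, B * f y ∂μ := by
        refine integral_mono_of_nonneg ?_ ((hf.mono_set hsΩ).const_mul _) ?_
        · filter_upwards [ae_restrict_mem hs] with y hy using mul_nonneg (hV y hy) (hf0 y)
        · filter_upwards [ae_restrict_mem hs] with y hy
            using mul_le_mul_of_nonneg_right (hVB y hy) (hf0 y)
    _ = B * ∫ y in s, f y ∂μ := integral_const_mul _ _
    _ ≤ B * D := mul_le_mul_of_nonneg_left
        ((setIntegral_mono_set hf (.of_forall hf0) hsΩ.eventuallyLE).trans hD) hB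

/-- The bounds for a blow-up sequence with `V ≤ b` and `∫ e^u ≤ C₀`. A mass above `4 π` forces
`V ≥ 4 π / C₀` somewhere near the blow-up point, whence the choice of `a`. -/
noncomputable def BlowUpBounds.ofBounds (b C₀ C₁ C₂ : ℝ) : BlowUpBounds where
  a := 2 * π / (|C₀| + 1)
  b := |b| + 1
  M := (|b| + 1) * (|C₀| + 1)
  C₁ := |C₁| + 1
  C₂ := |C₂| + 1
  a_pos := by positivity
  b_pos := by positivity
  M_pos := by positivity
  C₁_pos := by positivity
  C₂_pos := by positivity

theorem le_abs_add_one_of_le {x y : ℝ} (h : x ≤ y) : x ≤ |y| + 1 := by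
  linarith [le_abs_self y]

theorem ConcentratedSolution.of_lt_mass {Ω : Set E2} (hΩ : IsOpen Ω)
    (hΩb : Bornology.IsBounded Ω) {b C₀ C₁ C₂ δ ω : ℝ} {x : E2} {u V : E2 → ℝ}
    (hball : ball x δ ⊆ Ω) (hu : ContDiffOn ℝ 2 u Ω) (huc : ContinuousOn u (closure Ω))
    (hVb : ∀ y ∈ Ω, 0 ≤ V y ∧ V y ≤ b) (hVosc : ∀ y ∈ ball x δ, |V y - V x| ≤ ω)
    (hpde : ∀ y ∈ Ω, -lapl u y = V y * Real.exp (u y)) (hbdry : ∀ y ∈ frontier Ω, 0 ≤ u y)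
    (hint : ∫ y in Ω, Real.exp (u y) ≤ C₀) (hmax : ∀ y ∈ Ω, u y ≤ u x)
    (hC₁ : ∀ y : E2, ‖y‖ = 1 / 16 → u (x + δ • y) ≤ C₁)
    (hC₂ : ∀ y : E2, ‖y‖ = 1 / 2 → u (x + δ • y) ≤ C₂)
    (hwidth : 16 * Real.exp (-u x / 2) ≤ δ) (hω : ω ≤ 2 * π / (|C₀| + 1))
    (hmass_gt : 4 * π < ∫ y in ball x (δ / 2), V y * Real.exp (u y))
    (hmass_le : ∫ y in ball x (δ / 2), V y * Real.exp (u y) ≤ 8 * π + π / 2) :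
    ConcentratedSolution (.ofBounds b C₀ C₁ C₂) δ ω x u V := by
  have hδ : 0 < δ := (by positivity : 0 < 16 * Real.exp (-u x / 2)).trans_le hwidth
  have hexp : IntegrableOn (fun y => Real.exp (u y)) Ω :=
    (huc.rexp.integrableOn_compact hΩb.isCompact_closure).mono_set subset_closure
  have hV0 : ∀ y ∈ ball x δ, 0 ≤ V y := fun y hy => (hVb y (hball hy)).1
  have hVb' : ∀ y ∈ ball x δ, V y ≤ |b| + 1 := fun y hy =>
    le_abs_add_one_of_le (hVb y (hball hy)).2
  have hmass : ∀ ρ ≤ δ, ∀ B, 0 ≤ B → (∀ y ∈ ball x δ, V y ≤ B) →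
      ∫ y in ball x ρ, V y * Real.exp (u y) ≤ B * (|C₀| + 1) := fun ρ hρ B hB hVB =>
    have hsub := ball_subset_ball hρ
    setIntegral_mul_le_mul_of_setIntegral_le measurableSet_ball (hsub.trans hball) hexp
      (fun _ => (Real.exp_pos _).le) hB (fun y hy => hV0 y (hsub hy)) (fun y hy => hVB y (hsub hy))
      (le_abs_add_one_of_le hint)
  have hcenter : 2 * π / (|C₀| + 1) ≤ V x := by
    have hx := mem_ball_self (x := x) hδ
    have hupper := hmass_gt.trans_le <| hmass (δ / 2) (by linarith) (V x + ω)
      (add_nonneg (hV0 x hx) ((abs_nonneg _).trans (hVosc x hx)))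
      fun y hy => by linarith [le_of_abs_le (hVosc y hy)]
    rw [← div_lt_iff₀ (by positivity), show 4 * π = 2 * π + 2 * π by ring, add_div] at hupper
    linarith
  exact
  { width_le := hwidth
    contDiffOn := hu.mono hball
    nonneg := fun y hy => nonneg_of_lapl_nonpos hΩ hΩb hu huc (fun z hz => neg_nonneg.1 <|
      hpde z hz ▸ mul_nonneg (hVb z hz).1 (Real.exp_pos _).le) hbdry (hball hy)
    le_apply_center := fun y hy => hmax y (hball hy)
    neg_lapl_eq := fun y hy => hpde y (hball hy)
    potential_nonneg := hV0
    potential_le := hVb'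
    abs_potential_sub_le := hVosc
    le_potential_center := hcenter
    mass_le := hmass _ (by linarith) _ (by positivity) hVb'
    inner_mass_le := hmass_le
    le_of_norm_eq := fun y hy => le_abs_add_one_of_le (hC₁ y hy)
    le_of_norm_eq_one_half := fun y hy => le_abs_add_one_of_le (hC₂ y hy) }

theorem abs_sub_le_of_holder {E : Type*} [SeminormedAddCommGroup E] {V : E → ℝ} {x y : E}
    {A s δ : ℝ} (hs : 0 ≤ s) (hV : |V y - V x| ≤ A * ‖y - x‖ ^ s) (hy : y ∈ ball x δ) :
    |V y - V x| ≤ |A| * δ ^ s := by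
  have hyδ : ‖y - x‖ ≤ δ := (mem_ball_iff_norm.1 hy).le
  refine hV.trans ?_
  gcongr
  exact le_abs_self A

theorem tendsto_const_mul_rpow_zero {α : Type*} {l : Filter α} {δ : α → ℝ} {s : ℝ} (hs : 0 < s)
    (hδ : Tendsto δ l (𝓝 0)) (A : ℝ) : Tendsto (fun i => A * δ i ^ s) l (𝓝 0) := by
  simpa [Real.zero_rpow hs.ne'] using (hδ.rpow_const (.inr hs.le)).const_mul A

theorem stmt9_general {Ω : Set E2} (hΩ : IsOpen Ω) (hΩb : Bornology.IsBounded Ω) (b C₀ : ℝ)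
    (V u : ℕ → E2 → ℝ) (x_ : ℕ → E2) (δ r ω : ℕ → ℝ) (v : ℕ → E2 → ℝ)
    (hu : ∀ i, ContDiffOn ℝ 2 (u i) Ω) (huc : ∀ i, ContinuousOn (u i) (closure Ω))
    (hVb : ∀ i, ∀ x ∈ Ω, 0 ≤ V i x ∧ V i x ≤ b)
    (hVosc : ∀ i, ∀ y ∈ ball (x_ i) (δ i), |V i y - V i (x_ i)| ≤ ω i)
    (hω : Tendsto ω atTop (𝓝 0))
    (hpde : ∀ i, ∀ x ∈ Ω, -lapl (u i) x = V i x * Real.exp (u i x))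
    (hbdry : ∀ i, ∀ x ∈ frontier Ω, 0 ≤ u i x)
    (hint : ∀ i, ∫ y in Ω, Real.exp (u i y) ≤ C₀)
    (hxmem : ∀ i, x_ i ∈ Ω) (hmax : ∀ i, ∀ y ∈ Ω, u i y ≤ u i (x_ i))
    (hδ : ∀ i, δ i = infDist (x_ i) (frontier Ω))
    (hr : ∀ i, r i = Real.exp (-u i (x_ i) / 2))
    (hrδ : Tendsto (fun i => r i / δ i) atTop (𝓝 0))
    (hmass : Tendsto (fun i => ∫ y in ball (x_ i) (δ i / 2), V i y * Real.exp (u i y)) atTop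
      (𝓝 (8 * π)))
    (hbound : ∀ ε : ℝ, 0 < ε → ε < 1 → ∃ Cε : ℝ, ∀ i, ∀ y : E2, ‖y‖ = ε →
      u i (x_ i + δ i • y) ≤ Cε)
    (hv : ∀ i θ, v i θ = u i (x_ i + r i • θ) - u i (x_ i)) :
    ∃ C' : ℝ, ∀ i, ∫ θ in ball (0 : E2) (δ i / (2 * r i)),
      1 / (2 * π) * Real.log ‖θ‖ * (V i (x_ i + r i • θ) * Real.exp (v i θ)) ≤ C' := by
  have hδpos : ∀ i, 0 < δ i := fun i => hδ i ▸ infDist_frontier_pos hΩ hΩb (hxmem i)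
  have hball : ∀ i, ball (x_ i) (δ i) ⊆ Ω := fun i =>
    hδ i ▸ ball_infDist_frontier_subset hΩb (hxmem i)
  obtain ⟨C₁, hC₁⟩ := hbound (1 / 16) (by norm_num) (by norm_num)
  obtain ⟨C₂, hC₂⟩ := hbound (1 / 2) (by norm_num) (by norm_num)
  obtain ⟨κ, hκ, C, hC⟩ :=
    ConcentratedSolution.exists_setIntegral_log_norm_mul_le (.ofBounds b C₀ C₁ C₂)
  have hscale : Tendsto (fun i => 16 * (r i / δ i)) atTop (𝓝 0) := by
    simpa using hrδ.const_mul 16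
  have hpi := Real.pi_pos
  suffices hev : ∀ᶠ i in atTop, ∫ θ in ball (0 : E2) (δ i / (2 * r i)),
      1 / (2 * π) * Real.log ‖θ‖ * (V i (x_ i + r i • θ) * Real.exp (v i θ)) ≤ C from
    (isBoundedUnder_of_eventually_le hev).bddAbove_range.imp fun C' hC' i => hC' ⟨i, rfl⟩
  filter_upwards [hscale.eventually_le_const one_pos, hscale.eventually_le_const hκ,
    hω.eventually_le_const (by positivity : 0 < 2 * π / (|C₀| + 1)), hω.eventually_le_const hκ,
    hmass.eventually_const_lt (by linarith : 4 * π < 8 * π),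
    hmass.eventually_le_const (by linarith : 8 * π < 8 * π + π / 2)]
    with i hscale_one hscale_κ hω_a hω_κ hmass_gt hmass_le
  have hwidth : 16 * Real.exp (-u i (x_ i) / 2) ≤ δ i := by
    rwa [mul_div_assoc', div_le_one (hδpos i), hr i] at hscale_one
  simp only [hv]
  exact hC _ _ _ _ _ _ (.of_lt_mass hΩ hΩb (hball i) (hu i) (huc i) (hVb i) (hVosc i) (hpde i)
    (hbdry i) (hint i) (hmax i) (hC₁ i) (hC₂ i) hwidth hω_a hmass_gt hmass_le) (hr i) hscale_κ hω_κ

theorem stmt9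
    (b A s C₀ : ℝ) (hs1 : 1/2 < s) (hs2 : s ≤ 1)
    (V u : ℕ → E2 → ℝ) (x_ : ℕ → E2) (δ r : ℕ → ℝ) (v : ℕ → E2 → ℝ)
    (hu : ∀ i, ContDiffOn ℝ 2 (u i) (closedBall (0:E2) 1))
    (hVb : ∀ i, ∀ x ∈ ball (0:E2) 1, 0 ≤ V i x ∧ V i x ≤ b)
    (hVhol : ∀ i, ∀ x ∈ ball (0:E2) 1, ∀ y ∈ ball (0:E2) 1, |V i x - V i y| ≤ A * ‖x - y‖ ^ s)
    (hpde : ∀ i, ∀ x ∈ ball (0:E2) 1, -(lapl (u i) x) = V i x * Real.exp (u i x))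
    (hbc : ∀ i, ∀ x ∈ sphere (0:E2) 1, u i x = 0)
    (hint : ∀ i, (∫ y in ball (0:E2) 1, Real.exp (u i y)) ≤ C₀)
    (hxmem : ∀ i, x_ i ∈ ball (0:E2) 1)
    (hmax : ∀ i, ∀ y ∈ closedBall (0:E2) 1, u i y ≤ u i (x_ i))
    (hblow : Tendsto (fun i => u i (x_ i)) atTop atTop)
    (hδ : ∀ i, δ i = Metric.infDist (x_ i) (sphere (0:E2) 1))
    (hδ0 : Tendsto δ atTop (nhds 0))
    (hr : ∀ i, r i = Real.exp (-(u i (x_ i)) / 2))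
    (hrδ : Tendsto (fun i => r i / δ i) atTop (nhds 0))
    (hmass : Tendsto (fun i => ∫ y in ball (x_ i) (δ i / 2), V i y * Real.exp (u i y)) atTop
      (nhds (8 * Real.pi)))
    (hbound : ∀ ε : ℝ, 0 < ε → ε < 1 → ∃ Cε : ℝ, ∀ i, ∀ y : E2, ‖y‖ = ε →
      u i (x_ i + δ i • y) ≤ Cε)
    (hv : ∀ i θ, v i θ = u i (x_ i + r i • θ) - u i (x_ i)) :
    ∃ C' : ℝ, ∀ i, (∫ θ in ball (0:E2) (δ i / (2 * r i)),
      (1 / (2 * Real.pi)) * Real.log ‖θ‖ * (V i (x_ i + r i • θ) * Real.exp (v i θ))) ≤ C' := by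
  rw [← frontier_ball (0 : E2) one_ne_zero] at hbc hδ
  have hs0 : 0 < s := one_half_pos.trans hs1
  have hball : ∀ i, ball (x_ i) (δ i) ⊆ ball 0 1 := fun i =>
    hδ i ▸ ball_infDist_frontier_subset isBounded_ball (hxmem i)
  exact stmt9_general isOpen_ball isBounded_ball b C₀ V u x_ δ r (fun i => |A| * δ i ^ s) v
    (fun i => (hu i).mono ball_subset_closedBall)
    (fun i => (hu i).continuousOn.mono closure_ball_subset_closedBall) hVb
    (fun i y hy => abs_sub_le_of_holder hs0.le (hVhol i y (hball i hy) _ (hxmem i)) hy)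
    (tendsto_const_mul_rpow_zero hs0 hδ0 _) hpde (fun i x hx => (hbc i x hx).ge) hint hxmem
    (fun i y hy => hmax i y (ball_subset_closedBall hy)) hδ hr hrδ hmass hbound hv
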